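/- arXiv:math-ph/0506042 — 9 statements merged into one kernel-verified Lean document; each statement's English description precedes it below -/
import Mathlib

section
/- Let ν, k, ω ∈ ℝ with k ≠ 0, set c = ω/k, and let η : ℝ → ℝ be three times continuously differentiable. Suppose that u(x,t) := η(kx − ωt) solves the Camassa–Holm equation u_t + 3uu_x = u_{xxt} + 2u_x u_{xx} + u u_{xxx} − 2ν u_x on all of ℝ². Then there exist constants A, B ∈ ℝ such that for every θ ∈ ℝ, k²(c − η(θ)) η′(θ)² + (2ν − c) η(θ)² + η(θ)³ + 2B η(θ) − 2A = 0. -/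
/-!
Along `u(x,t) = η(kx − ωt)` the equation becomes `k` times the third-order ODE
`(2ν − c)η′ + 3ηη′ + k²((c − η)η‴ − 2η′η″) = 0`.
Since `(c − η)η‴ − 2η′η″` is the derivative of `(c − η)η″ − η′²/2`, the ODE integrates to
`(2ν − c)η + (3/2)η² + k²((c − η)η″ − η′²/2) + B = 0`.
With the integrating factor `2η′` the left side is again a derivative, namely that of
`k²(c − η)η′² + (2ν − c)η² + η³ + 2Bη`, which is therefore a constant `2A`.
-/

section TravellingWave

variable {𝕜 : Type*} [NontriviallyNormedField 𝕜]

/-- The Camassa–Holm equation `u_t + 3uu_x = u_{xxt} + 2u_x u_{xx} + u u_{xxx} − 2ν u_x` for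
`u x t`, holding at every point. The partial derivatives are values of `deriv`, so this expresses
the classical equation only for functions `u` that have the derivatives occurring in it. -/
def IsCamassaHolmSolution (ν : 𝕜) (u : 𝕜 → 𝕜 → 𝕜) : Prop :=
  ∀ x t : 𝕜,
    deriv (fun t' => u x t') t + 3 * u x t * deriv (fun x' => u x' t) x =
      deriv (fun t' => deriv (fun x₂ => deriv (fun x₁ => u x₁ t') x₂) x) t
        + 2 * deriv (fun x' => u x' t) x *
            deriv (fun x₂ => deriv (fun x₁ => u x₁ t) x₂) x
        + u x t *
            deriv (fun x₃ => deriv (fun x₂ => deriv (fun x₁ => u x₁ t) x₂) x₃) x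
        - 2 * ν * deriv (fun x' => u x' t) x

lemma deriv_comp_const_mul_sub_const {E : Type*} [NormedAddCommGroup E] [NormedSpace 𝕜 E]
    (f : 𝕜 → E) (a b x : 𝕜) :
    deriv (fun y => f (a * y - b)) x = a • deriv f (a * x - b) := by
  rw [deriv_comp_mul_left a (fun z => f (z - b)), deriv_comp_sub_const]

lemma deriv_comp_const_sub_const_mul {E : Type*} [NormedAddCommGroup E] [NormedSpace 𝕜 E]
    (f : 𝕜 → E) (a b x : 𝕜) :
    deriv (fun y => f (b - a * y)) x = -a • deriv f (b - a * x) := by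
  rw [deriv_comp_mul_left a (fun z => f (b - z)), deriv_comp_const_sub, smul_neg, neg_smul]

theorem isCamassaHolmSolution_travellingWave_iff {ν k ω : 𝕜} (hk : k ≠ 0) {η : 𝕜 → 𝕜} :
    IsCamassaHolmSolution ν (fun x t => η (k * x - ω * t)) ↔
      ∀ θ, (2 * ν - ω / k) * deriv η θ + 3 * η θ * deriv η θ
        + k ^ 2 * ((ω / k - η θ) * deriv (deriv (deriv η)) θ
          - 2 * deriv η θ * deriv (deriv η) θ) = 0 := by
  simp only [IsCamassaHolmSolution, deriv_comp_const_mul_sub_const,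
    deriv_comp_const_sub_const_mul, smul_eq_mul, deriv_const_mul_field]
  obtain ⟨c, rfl⟩ : ∃ c, ω = c * k := ⟨ω / k, (div_mul_cancel₀ ω hk).symm⟩
  rw [mul_div_cancel_right₀ c hk]
  constructor
  · intro hPDE θ
    have hθ := hPDE (θ / k) 0
    rw [mul_zero, sub_zero, mul_div_cancel₀ θ hk] at hθ
    apply mul_left_cancel₀ hk
    linear_combination hθ
  · intro hODE x t
    linear_combination k * hODE (k * x - c * k * t)

end TravellingWave

section Quadrature

variable {𝕜 : Type*} [RCLike 𝕜]

lemma exists_eq_const_of_hasDerivAt_zero {E : Type*} [NormedAddCommGroup E] [NormedSpace 𝕜 E]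
    {f : 𝕜 → E} (hf : ∀ x, HasDerivAt f 0 x) : ∃ C, ∀ x, f x = C :=
  ⟨f 0, fun x => is_const_of_deriv_eq_zero (fun y => (hf y).differentiableAt)
    (fun y => (hf y).deriv) x 0⟩

variable {a b c : 𝕜} {η η' η'' η''' : 𝕜 → 𝕜}

theorem exists_travellingWave_first_integral (hη : ∀ θ, HasDerivAt η (η' θ) θ)
    (hη' : ∀ θ, HasDerivAt η' (η'' θ) θ) (hη'' : ∀ θ, HasDerivAt η'' (η''' θ) θ)
    (hODE : ∀ θ, a * η' θ + 3 * η θ * η' θ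
      + b * ((c - η θ) * η''' θ - 2 * η' θ * η'' θ) = 0) :
    ∃ B, ∀ θ, a * η θ + 3 / 2 * η θ ^ 2
      + b * ((c - η θ) * η'' θ - 1 / 2 * η' θ ^ 2) + B = 0 := by
  have hderiv (θ : 𝕜) : HasDerivAt (fun θ => a * η θ + 3 / 2 * η θ ^ 2
      + b * ((c - η θ) * η'' θ - 1 / 2 * η' θ ^ 2)) 0 θ := by
    refine ((((hη θ).const_mul a).add (((hη θ).pow 2).const_mul (3 / 2))).add
      (((((hη θ).const_sub c).mul (hη'' θ)).sub
        (((hη' θ).pow 2).const_mul (1 / 2))).const_mul b)).congr_deriv ?_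
    linear_combination hODE θ
  obtain ⟨C, hC⟩ := exists_eq_const_of_hasDerivAt_zero hderiv
  exact ⟨-C, fun θ => by rw [hC, add_neg_cancel]⟩

theorem exists_travellingWave_second_integral {B : 𝕜} (hη : ∀ θ, HasDerivAt η (η' θ) θ)
    (hη' : ∀ θ, HasDerivAt η' (η'' θ) θ)
    (hfirst : ∀ θ, a * η θ + 3 / 2 * η θ ^ 2
      + b * ((c - η θ) * η'' θ - 1 / 2 * η' θ ^ 2) + B = 0) :
    ∃ A, ∀ θ, b * (c - η θ) * η' θ ^ 2 + a * η θ ^ 2 + η θ ^ 3 + 2 * B * η θ - 2 * A = 0 := by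
  have hderiv (θ : 𝕜) : HasDerivAt (fun θ => b * (c - η θ) * η' θ ^ 2 + a * η θ ^ 2
      + η θ ^ 3 + 2 * B * η θ) 0 θ := by
    refine (((((((hη θ).const_sub c).const_mul b).mul ((hη' θ).pow 2)).add
      (((hη θ).pow 2).const_mul a)).add ((hη θ).pow 3)).add
      ((hη θ).const_mul (2 * B))).congr_deriv ?_
    simp only [Pi.pow_apply]
    linear_combination 2 * η' θ * hfirst θ
  obtain ⟨C, hC⟩ := exists_eq_const_of_hasDerivAt_zero hderiv
  exact ⟨C / 2, fun θ => by rw [hC, mul_div_cancel₀ C two_ne_zero, sub_self]⟩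

end Quadrature

theorem stmt_0_general {𝕜 : Type*} [RCLike 𝕜] {ν k ω c : 𝕜} (hk : k ≠ 0) (hc : c = ω / k)
    {η : 𝕜 → 𝕜} (hη : ∀ m < 3, Differentiable 𝕜 (deriv^[m] η))
    (hPDE : IsCamassaHolmSolution ν fun x t => η (k * x - ω * t)) :
    ∃ A B : 𝕜, ∀ θ : 𝕜,
      k ^ 2 * (c - η θ) * (deriv η θ) ^ 2 + (2 * ν - c) * (η θ) ^ 2
        + (η θ) ^ 3 + 2 * B * η θ - 2 * A = 0 := by
  subst hc
  have h₀ (θ : 𝕜) : HasDerivAt η (deriv η θ) θ := (hη 0 (by norm_num) θ).hasDerivAt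
  have h₁ (θ : 𝕜) : HasDerivAt (deriv η) (deriv (deriv η) θ) θ :=
    (hη 1 (by norm_num) θ).hasDerivAt
  have h₂ (θ : 𝕜) : HasDerivAt (deriv (deriv η)) (deriv (deriv (deriv η)) θ) θ :=
    (hη 2 (by norm_num) θ).hasDerivAt
  have hODE := (isCamassaHolmSolution_travellingWave_iff hk).mp hPDE
  obtain ⟨B, hB⟩ := exists_travellingWave_first_integral h₀ h₁ h₂ hODE
  obtain ⟨A, hA⟩ := exists_travellingWave_second_integral h₀ h₁ hB
  exact ⟨A, B, hA⟩

/-- A travelling-wave solution `u(x,t) = η(kx − ωt)` of the Camassa–Holm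
equation `u_t + 3uu_x = u_{xxt} + 2u_x u_{xx} + u u_{xxx} − 2ν u_x` satisfies, after one
integration, `k²(c − η)η′² + (2ν − c)η² + η³ + 2Bη − 2A = 0` for some constants `A, B`. -/
theorem stmt_0 (ν k ω : ℝ) (hk : k ≠ 0) (c : ℝ) (hc : c = ω / k)
    (η : ℝ → ℝ) (hη : ContDiff ℝ 3 η)
    (u : ℝ → ℝ → ℝ) (hu : ∀ x t, u x t = η (k * x - ω * t))
    (hPDE : ∀ x t : ℝ,
      deriv (fun t' => u x t') t + 3 * u x t * deriv (fun x' => u x' t) x =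
        deriv (fun t' => deriv (fun x₂ => deriv (fun x₁ => u x₁ t') x₂) x) t
          + 2 * deriv (fun x' => u x' t) x *
              deriv (fun x₂ => deriv (fun x₁ => u x₁ t) x₂) x
          + u x t *
              deriv (fun x₃ => deriv (fun x₂ => deriv (fun x₁ => u x₁ t) x₂) x₃) x
          - 2 * ν * deriv (fun x' => u x' t) x) :
    ∃ A B : ℝ, ∀ θ : ℝ,
      k ^ 2 * (c - η θ) * (deriv η θ) ^ 2 + (2 * ν - c) * (η θ) ^ 2
        + (η θ) ^ 3 + 2 * B * η θ - 2 * A = 0 := by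
  obtain rfl : u = fun x t => η (k * x - ω * t) := funext₂ hu
  exact stmt_0_general hk hc (fun m hm => iteratedDeriv_eq_iterate (n := m) (f := η) ▸
    hη.differentiable_iteratedDeriv m (by exact_mod_cast hm)) hPDE
end

section
/- Fix ν ∈ ℝ and u¹, u², u³ ∈ ℝ with −ν < u¹ < u² < u³. Let κ ∈ ℝ be such that ∫_{u¹}^{u²} P_ν(λ)/√(R(λ)) dλ = 0, where P_ν(λ) := κ − (ν+u¹)(ν+u²)(ν+u³)/(2(λ+ν)). Then P_ν(u¹) < 0 and 0 < P_ν(u²) < P_ν(u³), and there is a unique λ* ∈ (u¹, u²) with P_ν(λ*) = 0. -/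
/-!
By the first mean value theorem with the positive weight `1/√R`, the vanishing of the a-cycle
integral produces a zero `λ* ∈ (u¹, u²)` of `P_ν`; everything else holds because `P_ν` is strictly
increasing on `(-ν, ∞)`. The weight is integrable despite its endpoint singularities: it is a
continuous function times `1/√((λ - u¹)(u² - λ))`, an affine pullback of the Chebyshev weight
`1/√(1 - y²)`.
-/

section

open Set MeasureTheory

variable {a b : ℝ}

lemma exists_mem_Ioo_eq_const_mul_intervalIntegral_of_nonneg {f w : ℝ → ℝ} (hab : a < b)
    (hf : ContinuousOn f (Icc a b)) (hw : IntervalIntegrable w volume a b)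
    (hw_nonneg : ∀ x ∈ Ioo a b, 0 ≤ w x) :
    ∃ c ∈ Ioo a b, ∫ x in a..b, f x * w x = f c * ∫ x in a..b, w x := by
  have hfw : IntervalIntegrable (fun x ↦ f x * w x) volume a b :=
    hw.continuousOn_mul (by rwa [uIcc_of_le hab.le])
  rw [intervalIntegrable_iff_integrableOn_Ioo_of_le hab.le] at hw hfw
  simp only [intervalIntegral.integral_of_le hab.le, integral_Ioc_eq_integral_Ioo]
  exact exists_eq_const_mul_setIntegral_of_ae_nonneg (isConnected_Ioo hab) measurableSet_Ioo
    (hf.mono Ioo_subset_Icc_self) hw hfw (ae_restrict_of_forall_mem measurableSet_Ioo hw_nonneg)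

lemma exists_mem_Ioo_eq_zero_of_intervalIntegral_mul_eq_zero {f w : ℝ → ℝ} (hab : a < b)
    (hf : ContinuousOn f (Icc a b)) (hw : IntervalIntegrable w volume a b)
    (hw_pos : ∀ x ∈ Ioo a b, 0 < w x) (h_integral : ∫ x in a..b, f x * w x = 0) :
    ∃ c ∈ Ioo a b, f c = 0 := by
  obtain ⟨c, hc, h_mean⟩ := exists_mem_Ioo_eq_const_mul_intervalIntegral_of_nonneg hab hf hw
    fun x hx ↦ (hw_pos x hx).le
  have hw_integral : 0 < ∫ x in a..b, w x :=
    intervalIntegral.intervalIntegral_pos_of_pos_on hw hw_pos hab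
  exact ⟨c, hc, (mul_eq_zero.mp (h_mean.symm.trans h_integral)).resolve_right hw_integral.ne'⟩

lemma intervalIntegrable_inv_sqrt_sub_mul_sub (a b : ℝ) :
    IntervalIntegrable (fun x ↦ (√((x - a) * (b - x)))⁻¹) volume a b := by
  rcases eq_or_ne a b with rfl | hab
  · exact IntervalIntegrable.refl
  have hba : b - a ≠ 0 := sub_ne_zero.mpr hab.symm
  have h_factor (x : ℝ) : (√((x - a) * (b - x)))⁻¹ =
      |(b - a) / 2|⁻¹ * √(1 - (2 / (b - a) * x - (a + b) / (b - a)) ^ 2)⁻¹ := by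
    have h_sq : (x - a) * (b - x) =
        ((b - a) / 2) ^ 2 * (1 - (2 / (b - a) * x - (a + b) / (b - a)) ^ 2) := by
      field_simp
      ring
    rw [h_sq, Real.sqrt_mul (sq_nonneg _), Real.sqrt_sq_eq_abs, mul_inv, Real.sqrt_inv]
  have h_left : (-1 + (a + b) / (b - a)) / (2 / (b - a)) = a := by field_simp; ring
  have h_right : (1 + (a + b) / (b - a)) / (2 / (b - a)) = b := by field_simp; ring
  simp only [h_factor]
  simpa only [h_left, h_right] using
    ((Polynomial.Chebyshev.intervalIntegrable_sqrt_one_sub_sq_inv.comp_sub_right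
      ((a + b) / (b - a))).comp_mul_left (c := 2 / (b - a))).const_mul |(b - a) / 2|⁻¹

lemma intervalIntegrable_inv_sqrt_mul_sub_mul_sub {g : ℝ → ℝ} (hg : ContinuousOn g (uIcc a b))
    (hg_pos : ∀ x ∈ uIcc a b, 0 < g x) :
    IntervalIntegrable (fun x ↦ (√(g x * ((x - a) * (b - x))))⁻¹) volume a b := by
  have hg_inv_sqrt : ContinuousOn (fun x ↦ (√(g x))⁻¹) (uIcc a b) :=
    hg.sqrt.inv₀ fun x hx ↦ (Real.sqrt_pos.mpr (hg_pos x hx)).ne'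
  refine ((intervalIntegrable_inv_sqrt_sub_mul_sub a b).continuousOn_mul hg_inv_sqrt).congr ?_
  intro x hx
  simp only [Real.sqrt_mul (hg_pos x (uIoc_subset_uIcc hx)).le, mul_inv]

lemma mul_sub_four_roots_eq (r a b s x : ℝ) :
    (x - r) * (x - a) * (x - b) * (x - s) = (x - r) * (s - x) * ((x - a) * (b - x)) := by
  ring

lemma mul_sub_four_roots_pos {r s x : ℝ} (hr : r < a) (hs : b < s) (hx : x ∈ Ioo a b) :
    0 < (x - r) * (x - a) * (x - b) * (x - s) := by
  rw [mul_sub_four_roots_eq]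
  exact mul_pos (mul_pos (sub_pos.mpr (hr.trans hx.1)) (sub_pos.mpr (hx.2.trans hs)))
    (mul_pos (sub_pos.mpr hx.1) (sub_pos.mpr hx.2))

lemma intervalIntegrable_inv_sqrt_mul_sub_four_roots {r s : ℝ} (hr : r < a) (hab : a ≤ b)
    (hs : b < s) :
    IntervalIntegrable (fun x ↦ (√((x - r) * (x - a) * (x - b) * (x - s)))⁻¹) volume a b := by
  simp only [mul_sub_four_roots_eq]
  refine intervalIntegrable_inv_sqrt_mul_sub_mul_sub (by fun_prop) fun x hx ↦ ?_
  rw [uIcc_of_le hab] at hx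
  exact mul_pos (sub_pos.mpr (hr.trans_le hx.1)) (sub_pos.mpr (hx.2.trans_lt hs))

lemma strictMonoOn_const_sub_div_add {c : ℝ} (hc : 0 < c) (k ν : ℝ) :
    StrictMonoOn (fun x ↦ k - c / (x + ν)) (Ioi (-ν)) := fun _ hx _ _ hxy ↦
  sub_lt_sub_left (div_lt_div_of_pos_left hc (neg_lt_iff_pos_add.mp hx)
    (add_lt_add_left hxy ν)) k

lemma continuousOn_const_sub_div_add (k c ν : ℝ) :
    ContinuousOn (fun x ↦ k - c / (x + ν)) (Ioi (-ν)) :=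
  continuousOn_const.sub <| continuousOn_const.div (by fun_prop)
    fun _ hx ↦ (neg_lt_iff_pos_add.mp hx).ne'

end

/-- For `−ν < u¹ < u² < u³`, if `κ` is chosen so that the a-cycle integral of
`P_ν/√R` vanishes, where `P_ν(λ) = κ − (ν+u¹)(ν+u²)(ν+u³)/(2(λ+ν))`, then
`P_ν(u¹) < 0 < P_ν(u²) < P_ν(u³)` and `P_ν` has a unique zero `λ* ∈ (u¹, u²)`. -/
theorem stmt_2 (ν u1 u2 u3 : ℝ) (h0 : -ν < u1) (h12 : u1 < u2) (h23 : u2 < u3)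
    (R : ℝ → ℝ) (hR : ∀ l, R l = (l + ν) * (l - u1) * (l - u2) * (l - u3))
    (κ : ℝ) (Pn : ℝ → ℝ)
    (hPn : ∀ l, Pn l = κ - (ν + u1) * (ν + u2) * (ν + u3) / (2 * (l + ν)))
    (hnorm : (∫ l in u1..u2, Pn l / Real.sqrt (R l)) = 0) :
    Pn u1 < 0 ∧ 0 < Pn u2 ∧ Pn u2 < Pn u3 ∧
      ∃! l : ℝ, l ∈ Set.Ioo u1 u2 ∧ Pn l = 0 := by
  have hC : 0 < (ν + u1) * (ν + u2) * (ν + u3) :=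
    mul_pos (mul_pos (by linarith) (by linarith)) (by linarith)
  have hPn_eq : Pn = fun l ↦ κ - (ν + u1) * (ν + u2) * (ν + u3) / 2 / (l + ν) :=
    funext fun l ↦ by rw [hPn, div_div]
  have hmono : StrictMonoOn Pn (Set.Ioi (-ν)) :=
    hPn_eq ▸ strictMonoOn_const_sub_div_add (half_pos hC) κ ν
  have hcont : ContinuousOn Pn (Set.Icc u1 u2) := hPn_eq ▸
    (continuousOn_const_sub_div_add κ _ ν).mono fun _ hl ↦ h0.trans_le hl.1
  have hweight_pos : ∀ l ∈ Set.Ioo u1 u2, 0 < (√(R l))⁻¹ := fun l hl ↦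
    inv_pos.mpr <| Real.sqrt_pos.mpr <| by
      simpa only [hR, sub_neg_eq_add] using mul_sub_four_roots_pos h0 h23 hl
  have hweight : IntervalIntegrable (fun l ↦ (√(R l))⁻¹) MeasureTheory.volume u1 u2 := by
    simpa only [hR, sub_neg_eq_add] using
      intervalIntegrable_inv_sqrt_mul_sub_four_roots h0 h12.le h23
  obtain ⟨z, hz, hz0⟩ := exists_mem_Ioo_eq_zero_of_intervalIntegral_mul_eq_zero
    h12 hcont hweight hweight_pos (by simpa only [div_eq_mul_inv] using hnorm)
  have h02 : -ν < u2 := h0.trans h12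
  have h0z : -ν < z := h0.trans hz.1
  refine ⟨hz0 ▸ hmono h0 h0z hz.1, hz0 ▸ hmono h0z h02 hz.2,
    hmono h02 (h02.trans h23) h23, z, ⟨hz, hz0⟩, fun y ⟨hy, hy0⟩ ↦ ?_⟩
  exact hmono.injOn (h0.trans hy.1) h0z (hy0.trans hz0.symm)
end

section
/- Fix ν ∈ ℝ and u¹, u², u³ ∈ ℝ with −ν < u¹ < u² < u³. Then γ₂ := −I₂/I₀ + (1/2)(u¹+u²+u³−ν) I₁/I₀ satisfies γ₂ = (1/2)[u¹u² − ν u³ + (u³−u¹)(u²+ν) E(s)/K(s)], where s² = (u²−u¹)(u³+ν)/((u³−u¹)(u²+ν)). -/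
/-!
Write `a < b < c < d` for the branch points and `R` for the quartic. The function `√R / (x - a)`
vanishes at `b` and `c`, and its differential is a combination of `x ^ k dx / √R`, `k ≤ 2`, and
`(d - x) / (x - a) dx / √R`. Integrating it expresses `I₂ - (a + b + c + d) / 2 * I₁` through `I₀`
and the integral of the last form. The substitution that sends `sin² ψ = 0, 1, ∞, 1 / s²` to
`b, c, a, d` turns `dx / √R` into a constant multiple of `dψ / Δ`, `Δ = √(1 - s² sin² ψ)`, and
`(d - x) / (x - a)` into a constant multiple of `Δ²`, so these two integrals are multiples of
`K(s)` and `E(s)`.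
-/

namespace QuarticPeriod

open MeasureTheory Real Set

section CompleteEllipticIntegrals

variable {m : ℝ}

/-- The complete elliptic integral of the first kind, as a function of the parameter `m = s ^ 2`
rather than of the modulus `s`. -/
noncomputable def ellipticK (m : ℝ) : ℝ := ∫ ψ in (0 : ℝ)..(π / 2), 1 / √(1 - m * sin ψ ^ 2)

/-- The complete elliptic integral of the second kind, as a function of the parameter `m = s ^ 2`
rather than of the modulus `s`. -/
noncomputable def ellipticE (m : ℝ) : ℝ := ∫ ψ in (0 : ℝ)..(π / 2), √(1 - m * sin ψ ^ 2)

lemma one_sub_mul_sin_sq_pos (hm : m < 1) (ψ : ℝ) : 0 < 1 - m * sin ψ ^ 2 := by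
  rcases (sq_nonneg (sin ψ)).eq_or_lt with h | h
  · simp [← h]
  · nlinarith [sin_sq_le_one ψ]

lemma intervalIntegrable_div_sqrt_one_sub_mul_sin_sq (hm : m < 1) {f : ℝ → ℝ} (hf : Continuous f)
    (α β : ℝ) : IntervalIntegrable (fun ψ ↦ f ψ / √(1 - m * sin ψ ^ 2)) volume α β :=
  (hf.div (by fun_prop) fun ψ ↦
    (sqrt_pos.2 (one_sub_mul_sin_sq_pos hm ψ)).ne').intervalIntegrable α β

lemma ellipticK_pos (hm : m < 1) : 0 < ellipticK m :=
  intervalIntegral.intervalIntegral_pos_of_pos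
    (intervalIntegrable_div_sqrt_one_sub_mul_sin_sq hm continuous_const 0 (π / 2))
    (fun ψ ↦ one_div_pos.2 (sqrt_pos.2 (one_sub_mul_sin_sq_pos hm ψ))) pi_div_two_pos

end CompleteEllipticIntegrals

variable {a b c d : ℝ}

/-- The monic quartic with roots `a`, `b`, `c`, `d`: the elliptic curve `y ^ 2 = quartic a b c d x`
has these four points as branch points. -/
def quartic (a b c d x : ℝ) : ℝ := (x - a) * (x - b) * (x - c) * (x - d)

lemma quartic_pos_of_mem_Ioo (hab : a < b) (hcd : c < d) {x : ℝ} (hx : x ∈ Ioo b c) :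
    0 < quartic a b c d x :=
  mul_pos_of_neg_of_neg
    (mul_neg_of_pos_of_neg (mul_pos (by linarith [hx.1]) (by linarith [hx.1])) (by linarith [hx.2]))
    (by linarith [hx.2])

lemma hasDerivAt_quartic (a b c d x : ℝ) :
    HasDerivAt (quartic a b c d)
      ((x - b) * (x - c) * (x - d) +
        (x - a) * ((x - c) * (x - d) + (x - b) * (x - d) + (x - b) * (x - c))) x := by
  have linear (r : ℝ) : HasDerivAt (fun y ↦ y - r) 1 x := (hasDerivAt_id x).sub_const r
  exact ((((linear a).mul (linear b)).mul (linear c)).mul (linear d)).congr_deriv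
    (by simp only [Pi.mul_apply]; ring)

lemma hasDerivAt_sqrt_quartic_div_sub {x : ℝ} (hx : 0 < quartic a b c d x) :
    HasDerivAt (fun y ↦ √(quartic a b c d y) / (y - a))
      (x ^ 2 / √(quartic a b c d x) - (a + b + c + d) / 2 * (x / √(quartic a b c d x)) +
        (b * c + a * d) / 2 * (1 / √(quartic a b c d x)) +
        (b - a) * (c - a) / 2 * ((d - x) / (x - a) / √(quartic a b c d x))) x := by
  have hxa : x - a ≠ 0 := by
    intro h
    simp [quartic, h] at hx
  have hsqrt : √(quartic a b c d x) ≠ 0 := (sqrt_pos.2 hx).ne'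
  refine (((hasDerivAt_quartic a b c d x).sqrt hx.ne').div
    ((hasDerivAt_id' x).sub_const a) hxa).congr_deriv ?_
  field_simp
  rw [sq_sqrt hx.le, quartic]
  ring

section Substitution

/-- The parameter `s ^ 2` of the elliptic curve `y ^ 2 = quartic a b c d x`, a cross-ratio of its
branch points. -/
noncomputable def ellipticParameter (a b c d : ℝ) : ℝ :=
  (c - b) * (d - a) / ((d - b) * (c - a))

/-- The denominator of `legendreSubst`. -/
noncomputable def legendreDenom (a b c ψ : ℝ) : ℝ := (c - a) * cos ψ ^ 2 + (b - a) * sin ψ ^ 2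

/-- The substitution `x = legendreSubst a b c ψ` bringing the differential `dx / √R`, where `R` is
the quartic with roots `a`, `b`, `c`, `d`, to Legendre normal form. It is the Möbius transformation
in `sin ψ ^ 2` with `0 ↦ b`, `1 ↦ c` and `∞ ↦ a`. -/
noncomputable def legendreSubst (a b c ψ : ℝ) : ℝ := a + (b - a) * (c - a) / legendreDenom a b c ψ

/-- The derivative of `legendreSubst`. -/
noncomputable def legendreSubstDeriv (a b c ψ : ℝ) : ℝ :=
  2 * (b - a) * (c - a) * (c - b) * (sin ψ * cos ψ) / legendreDenom a b c ψ ^ 2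

lemma ellipticParameter_lt_one (hab : a < b) (hbc : b < c) (hcd : c < d) :
    ellipticParameter a b c d < 1 := by
  rw [ellipticParameter,
    div_lt_one (mul_pos (sub_pos.2 (hbc.trans hcd)) (sub_pos.2 (hab.trans hbc)))]
  nlinarith [mul_pos (sub_pos.2 hab) (sub_pos.2 hcd)]

lemma legendreDenom_pos (hab : a < b) (hac : a < c) (ψ : ℝ) : 0 < legendreDenom a b c ψ := by
  have hmin : 0 < min (c - a) (b - a) := lt_min (sub_pos.2 hac) (sub_pos.2 hab)
  calc 0 < min (c - a) (b - a) * (cos ψ ^ 2 + sin ψ ^ 2) := by rwa [cos_sq_add_sin_sq, mul_one]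
    _ ≤ legendreDenom a b c ψ := by
      rw [mul_add, legendreDenom]
      gcongr
      · exact min_le_left _ _
      · exact min_le_right _ _

lemma legendreSubst_zero (hac : a < c) : legendreSubst a b c 0 = b := by
  have : c - a ≠ 0 := sub_ne_zero.2 hac.ne'
  simp [legendreSubst, legendreDenom, this]

lemma legendreSubst_pi_div_two (hab : a < b) : legendreSubst a b c (π / 2) = c := by
  have : b - a ≠ 0 := sub_ne_zero.2 hab.ne'
  simp [legendreSubst, legendreDenom, mul_div_cancel_left₀, this]

lemma legendreSubst_sub_first (a b c ψ : ℝ) :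
    legendreSubst a b c ψ - a = (b - a) * (c - a) / legendreDenom a b c ψ := by
  rw [legendreSubst, add_sub_cancel_left]

lemma legendreSubst_sub_second (hab : a < b) (hac : a < c) (ψ : ℝ) :
    legendreSubst a b c ψ - b = (b - a) * (c - b) * sin ψ ^ 2 / legendreDenom a b c ψ := by
  have hD := (legendreDenom_pos hab hac ψ).ne'
  rw [legendreSubst]
  field_simp
  rw [legendreDenom, cos_sq']
  ring

lemma third_sub_legendreSubst (hab : a < b) (hac : a < c) (ψ : ℝ) :
    c - legendreSubst a b c ψ = (c - a) * (c - b) * cos ψ ^ 2 / legendreDenom a b c ψ := by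
  have hD := (legendreDenom_pos hab hac ψ).ne'
  rw [legendreSubst]
  field_simp
  rw [legendreDenom, sin_sq]
  ring

lemma fourth_sub_legendreSubst (hab : a < b) (hac : a < c) (hbd : b < d) (ψ : ℝ) :
    d - legendreSubst a b c ψ =
      (c - a) * (d - b) * (1 - ellipticParameter a b c d * sin ψ ^ 2) / legendreDenom a b c ψ := by
  have hD := (legendreDenom_pos hab hac ψ).ne'
  have hca : c - a ≠ 0 := sub_ne_zero.2 hac.ne'
  have hdb : d - b ≠ 0 := sub_ne_zero.2 hbd.ne'
  rw [legendreSubst, ellipticParameter]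
  field_simp
  rw [legendreDenom, cos_sq']
  ring

lemma sub_legendreSubst_div_legendreSubst_sub (hab : a < b) (hac : a < c) (hbd : b < d) (ψ : ℝ) :
    (d - legendreSubst a b c ψ) / (legendreSubst a b c ψ - a) =
      (d - b) / (b - a) * (1 - ellipticParameter a b c d * sin ψ ^ 2) := by
  have hD := (legendreDenom_pos hab hac ψ).ne'
  have hba : b - a ≠ 0 := sub_ne_zero.2 hab.ne'
  have hca : c - a ≠ 0 := sub_ne_zero.2 hac.ne'
  rw [fourth_sub_legendreSubst hab hac hbd, legendreSubst_sub_first]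
  field_simp

lemma legendreSubst_mem_Icc (hab : a < b) (hbc : b < c) (ψ : ℝ) :
    legendreSubst a b c ψ ∈ Icc b c := by
  have hac := hab.trans hbc
  have hD := legendreDenom_pos hab hac ψ
  have := sub_pos.2 hab
  have := sub_pos.2 hac
  have := sub_pos.2 hbc
  rw [mem_Icc, ← sub_nonneg, ← sub_nonneg (a := c), legendreSubst_sub_second hab hac,
    third_sub_legendreSubst hab hac]
  constructor <;> positivity

lemma hasDerivAt_legendreSubst (hab : a < b) (hac : a < c) (ψ : ℝ) :
    HasDerivAt (legendreSubst a b c) (legendreSubstDeriv a b c ψ) ψ := by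
  have hdenom : HasDerivAt (legendreDenom a b c) (-(2 * (c - b) * (sin ψ * cos ψ))) ψ :=
    ((((hasDerivAt_cos ψ).fun_pow 2).const_mul (c - a)).add
      (((hasDerivAt_sin ψ).fun_pow 2).const_mul (b - a))).congr_deriv (by ring)
  refine (((hasDerivAt_const ψ ((b - a) * (c - a))).fun_div hdenom
    (legendreDenom_pos hab hac ψ).ne').const_add a).congr_deriv ?_
  rw [legendreSubstDeriv]
  ring

lemma continuous_legendreSubst (hab : a < b) (hac : a < c) : Continuous (legendreSubst a b c) :=
  continuous_iff_continuousAt.2 fun ψ ↦ (hasDerivAt_legendreSubst hab hac ψ).continuousAt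

lemma legendreSubstDeriv_pos (hab : a < b) (hbc : b < c) {ψ : ℝ} (hψ : ψ ∈ uIoo 0 (π / 2)) :
    0 < legendreSubstDeriv a b c ψ := by
  rw [uIoo_of_le pi_div_two_pos.le] at hψ
  have hD := legendreDenom_pos hab (hab.trans hbc) ψ
  have := sub_pos.2 hab
  have := sub_pos.2 (hab.trans hbc)
  have := sub_pos.2 hbc
  have hsin : 0 < sin ψ := sin_pos_of_pos_of_lt_pi hψ.1 (by linarith [hψ.2, pi_pos])
  have hcos : 0 < cos ψ := cos_pos_of_mem_Ioo ⟨by linarith [hψ.1, pi_pos], hψ.2⟩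
  rw [legendreSubstDeriv]
  positivity

lemma quartic_legendreSubst (hab : a < b) (hac : a < c) (hbd : b < d) (ψ : ℝ) :
    quartic a b c d (legendreSubst a b c ψ) =
      (legendreSubstDeriv a b c ψ / 2) ^ 2 *
        ((c - a) * (d - b) * (1 - ellipticParameter a b c d * sin ψ ^ 2)) := by
  have hneg (x : ℝ) : quartic a b c d x = (x - a) * (x - b) * (c - x) * (d - x) := by
    rw [quartic]; ring
  rw [hneg, legendreSubst_sub_first, legendreSubst_sub_second hab hac,
    third_sub_legendreSubst hab hac, fourth_sub_legendreSubst hab hac hbd, legendreSubstDeriv]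
  ring

lemma legendreSubstDeriv_div_sqrt_quartic (hab : a < b) (hbc : b < c) (hbd : b < d) {ψ : ℝ}
    (hψ : ψ ∈ uIoo 0 (π / 2)) :
    legendreSubstDeriv a b c ψ / √(quartic a b c d (legendreSubst a b c ψ)) =
      2 / √((c - a) * (d - b)) / √(1 - ellipticParameter a b c d * sin ψ ^ 2) := by
  have hac := hab.trans hbc
  have hφ' := legendreSubstDeriv_pos hab hbc hψ
  rw [quartic_legendreSubst hab hac hbd, sqrt_mul (sq_nonneg _), sqrt_sq (half_pos hφ').le,
    sqrt_mul (mul_pos (sub_pos.2 hac) (sub_pos.2 hbd)).le]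
  field_simp

lemma eqOn_legendreSubst_pullback (hab : a < b) (hbc : b < c) (hbd : b < d) (f : ℝ → ℝ) :
    EqOn (fun ψ ↦ legendreSubstDeriv a b c ψ •
        ((fun x ↦ f x / √(quartic a b c d x)) ∘ legendreSubst a b c) ψ)
      (fun ψ ↦ 2 / √((c - a) * (d - b)) *
        (f (legendreSubst a b c ψ) / √(1 - ellipticParameter a b c d * sin ψ ^ 2)))
      (uIoo 0 (π / 2)) := by
  intro ψ hψ
  calc legendreSubstDeriv a b c ψ •
        (f (legendreSubst a b c ψ) / √(quartic a b c d (legendreSubst a b c ψ)))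
      = f (legendreSubst a b c ψ) *
        (legendreSubstDeriv a b c ψ / √(quartic a b c d (legendreSubst a b c ψ))) := by
        rw [smul_eq_mul]; ring
    _ = _ := by rw [legendreSubstDeriv_div_sqrt_quartic hab hbc hbd hψ]; ring

/-- Both sides have Bochner's junk value `0` when the integrand is not integrable. -/
lemma integral_div_sqrt_quartic (hab : a < b) (hbc : b < c) (hbd : b < d) (f : ℝ → ℝ) :
    ∫ x in b..c, f x / √(quartic a b c d x) =
      2 / √((c - a) * (d - b)) * ∫ ψ in (0 : ℝ)..(π / 2),
        f (legendreSubst a b c ψ) / √(1 - ellipticParameter a b c d * sin ψ ^ 2) := by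
  have hac := hab.trans hbc
  have hsubst := intervalIntegral.integral_deriv_smul_comp_of_deriv_nonneg
    (a := 0) (b := π / 2) (g := fun x ↦ f x / √(quartic a b c d x))
    (continuous_legendreSubst hab hac).continuousOn
    (fun ψ _ ↦ hasDerivAt_legendreSubst hab hac ψ)
    (fun ψ hψ ↦ (legendreSubstDeriv_pos hab hbc hψ).le)
  rw [legendreSubst_zero hac, legendreSubst_pi_div_two hab] at hsubst
  rw [← hsubst, intervalIntegral.integral_congr_uIoo (eqOn_legendreSubst_pullback hab hbc hbd f),
    intervalIntegral.integral_const_mul]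

lemma intervalIntegrable_div_sqrt_quartic (hab : a < b) (hbc : b < c) (hcd : c < d) {f : ℝ → ℝ}
    (hf : ContinuousOn f (Icc b c)) :
    IntervalIntegrable (fun x ↦ f x / √(quartic a b c d x)) volume b c := by
  have hac := hab.trans hbc
  have hfφ : Continuous (f ∘ legendreSubst a b c) :=
    hf.comp_continuous (continuous_legendreSubst hab hac) (legendreSubst_mem_Icc hab hbc)
  have hsubst := intervalIntegral.integrable_deriv_smul_comp_iff_of_deriv_nonneg
    (a := 0) (b := π / 2) (g := fun x ↦ f x / √(quartic a b c d x))
    (continuous_legendreSubst hab hac).continuousOn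
    (fun ψ _ ↦ hasDerivAt_legendreSubst hab hac ψ)
    (fun ψ hψ ↦ (legendreSubstDeriv_pos hab hbc hψ).le)
  rw [legendreSubst_zero hac, legendreSubst_pi_div_two hab] at hsubst
  rw [← hsubst, intervalIntegrable_congr_uIoo (eqOn_legendreSubst_pullback hab hbc
    (hbc.trans hcd) f)]
  exact (intervalIntegrable_div_sqrt_one_sub_mul_sin_sq (ellipticParameter_lt_one hab hbc hcd)
    hfφ 0 (π / 2)).const_mul _

end Substitution

lemma integral_one_div_sqrt_quartic (hab : a < b) (hbc : b < c) (hbd : b < d) :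
    ∫ x in b..c, 1 / √(quartic a b c d x) =
      2 / √((c - a) * (d - b)) * ellipticK (ellipticParameter a b c d) :=
  integral_div_sqrt_quartic hab hbc hbd fun _ ↦ 1

lemma integral_sub_div_sub_div_sqrt_quartic (hab : a < b) (hbc : b < c) (hcd : c < d) :
    ∫ x in b..c, (d - x) / (x - a) / √(quartic a b c d x) =
      (d - b) / (b - a) *
        (2 / √((c - a) * (d - b)) * ellipticE (ellipticParameter a b c d)) := by
  rw [integral_div_sqrt_quartic hab hbc (hbc.trans hcd) fun x ↦ (d - x) / (x - a)]
  simp only [sub_legendreSubst_div_legendreSubst_sub hab (hab.trans hbc) (hbc.trans hcd),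
    mul_div_assoc, div_sqrt, intervalIntegral.integral_const_mul, ellipticE]
  ring

lemma integral_sq_div_sqrt_quartic (hab : a < b) (hbc : b < c) (hcd : c < d) :
    ∫ x in b..c, x ^ 2 / √(quartic a b c d x) =
      (a + b + c + d) / 2 * (∫ x in b..c, x / √(quartic a b c d x)) -
        (b * c + a * d) / 2 * (∫ x in b..c, 1 / √(quartic a b c d x)) -
        (b - a) * (c - a) / 2 * ∫ x in b..c, (d - x) / (x - a) / √(quartic a b c d x) := by
  have hne : ∀ x ∈ Icc b c, x - a ≠ 0 := fun x hx ↦ (sub_pos.2 (hab.trans_le hx.1)).ne'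
  have hint {f : ℝ → ℝ} (hf : ContinuousOn f (Icc b c)) :=
    intervalIntegrable_div_sqrt_quartic hab hbc hcd hf
  have h₀ := (hint (continuousOn_const (c := 1))).const_mul ((b * c + a * d) / 2)
  have h₁ := (hint (f := fun x ↦ x) continuousOn_id).const_mul ((a + b + c + d) / 2)
  have h₂ := hint (continuousOn_pow 2)
  have h₃ := (hint (f := fun x ↦ (d - x) / (x - a))
    (ContinuousOn.div (by fun_prop) (by fun_prop) hne)).const_mul ((b - a) * (c - a) / 2)
  have hcont : ContinuousOn (fun x ↦ √(quartic a b c d x) / (x - a)) (Icc b c) :=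
    ContinuousOn.div (by unfold quartic; fun_prop) (by fun_prop) hne
  have hexact := intervalIntegral.integral_eq_sub_of_hasDerivAt_of_le hbc.le hcont
    (fun x hx ↦ hasDerivAt_sqrt_quartic_div_sub (quartic_pos_of_mem_Ioo hab hcd hx))
    (((h₂.sub h₁).add h₀).add h₃)
  have hvanish : √(quartic a b c d c) / (c - a) - √(quartic a b c d b) / (b - a) = 0 := by
    simp [quartic]
  rw [hvanish, intervalIntegral.integral_add ((h₂.sub h₁).add h₀) h₃,
    intervalIntegral.integral_add (h₂.sub h₁) h₀, intervalIntegral.integral_sub h₂ h₁] at hexact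
  simp only [intervalIntegral.integral_const_mul] at hexact
  linear_combination hexact

end QuarticPeriod

open QuarticPeriod in
/-- explicit elliptic form of the normalization constant
`γ₂ = −I₂/I₀ + (1/2)(u¹+u²+u³−ν)I₁/I₀ = (1/2)[u¹u² − νu³ + (u³−u¹)(u²+ν)E(s)/K(s)]`. -/
theorem stmt_5 (ν u1 u2 u3 : ℝ) (h0 : -ν < u1) (h12 : u1 < u2) (h23 : u2 < u3)
    (R : ℝ → ℝ) (hR : ∀ l, R l = (l + ν) * (l - u1) * (l - u2) * (l - u3))
    (I0 I1 I2 : ℝ)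
    (hI0 : I0 = ∫ l in u1..u2, 1 / Real.sqrt (R l))
    (hI1 : I1 = ∫ l in u1..u2, l / Real.sqrt (R l))
    (hI2 : I2 = ∫ l in u1..u2, l ^ 2 / Real.sqrt (R l))
    (γ2 : ℝ) (hγ2 : γ2 = -I2 / I0 + (1 / 2) * (u1 + u2 + u3 - ν) * (I1 / I0))
    (ssq : ℝ) (hssq : ssq = (u2 - u1) * (u3 + ν) / ((u3 - u1) * (u2 + ν)))
    (K : ℝ)
    (hK : K = ∫ ψ in (0:ℝ)..(Real.pi / 2), 1 / Real.sqrt (1 - ssq * Real.sin ψ ^ 2))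
    (E : ℝ)
    (hE : E = ∫ ψ in (0:ℝ)..(Real.pi / 2), Real.sqrt (1 - ssq * Real.sin ψ ^ 2)) :
    γ2 = (1 / 2) * (u1 * u2 - ν * u3 + (u3 - u1) * (u2 + ν) * (E / K)) := by
  obtain rfl : R = quartic (-ν) u1 u2 u3 := funext fun l ↦ by rw [hR, quartic, sub_neg_eq_add]
  obtain rfl : ssq = ellipticParameter (-ν) u1 u2 u3 := by
    rw [hssq, ellipticParameter, sub_neg_eq_add, sub_neg_eq_add]
  rw [← ellipticK] at hK
  rw [← ellipticE] at hE
  have hKpos : 0 < K := hK ▸ ellipticK_pos (ellipticParameter_lt_one h0 h12 h23)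
  have hI0K := integral_one_div_sqrt_quartic h0 h12 (h12.trans h23)
  have hI2E := integral_sq_div_sqrt_quartic h0 h12 h23
  rw [integral_sub_div_sub_div_sqrt_quartic h0 h12 h23, ← hI0, ← hI1, ← hI2, ← hE] at hI2E
  rw [← hI0, ← hK] at hI0K
  have hba : u1 - -ν ≠ 0 := (sub_pos.2 h0).ne'
  have hsqrt : √((u2 - -ν) * (u3 - u1)) ≠ 0 := Real.sqrt_ne_zero'.2
    (mul_pos (sub_pos.2 (h0.trans h12)) (sub_pos.2 (h12.trans h23)))
  rw [hγ2, hI2E, hI0K]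
  field_simp
  ring
end

section
/- Fix ν ∈ ℝ and u¹, u², u³ ∈ ℝ with −ν < u¹ < u² < u³. Then γ₁ := −I₁/I₀ satisfies γ₁ = ν − (u¹+ν) Π(ρ², s) / K(s), where s² = (u²−u¹)(u³+ν)/((u³−u¹)(u²+ν)), ρ² = (u²−u¹)/(u²+ν), and Π(n, s) = ∫₀^{π/2} (1 − n sin²ψ)^{−1} (1 − s² sin²ψ)^{−1/2} dψ is the complete elliptic integral of the third kind (equal to the paper's Λ(K(s), ρ, s)). -/
/-!
For `a < b < c < d`, the substitution `x = a + (b - a) / (1 - n sin² ψ)`, `n = (c - b) / (c - a)`,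
is a Möbius transformation of `sin² ψ` sending `0, 1, ∞` to `b, c, a`. With the parameter `m`
chosen so that `sin² ψ = 1 / m` corresponds to `d`, it brings the differential
`dx / √((x - a) (x - b) (x - c) (x - d))` on `(b, c)` to Legendre's form, a constant times
`dψ / √(1 - m sin² ψ)`. Integrating `1` and `x` gives `K` and `a K + (b - a) Π` up to the same
constant, which cancels in the quotient.
-/

section EllipticIntegral

open Real Set intervalIntegral

/-- The complete elliptic integral of the first kind `K(s)`, as a function of the parameter
`m = s²`. -/
noncomputable def ellipticK (m : ℝ) : ℝ :=
  ∫ ψ in (0 : ℝ)..(π / 2), 1 / √(1 - m * sin ψ ^ 2)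

/-- The complete elliptic integral of the third kind `Π(n, s)`, as a function of the characteristic
`n` and the parameter `m = s²`. -/
noncomputable def ellipticPi (n m : ℝ) : ℝ :=
  ∫ ψ in (0 : ℝ)..(π / 2), 1 / ((1 - n * sin ψ ^ 2) * √(1 - m * sin ψ ^ 2))

theorem one_sub_mul_sin_sq_pos {n : ℝ} (hn : n < 1) (ψ : ℝ) : 0 < 1 - n * sin ψ ^ 2 :=
  sub_pos.2 <| calc
    n * sin ψ ^ 2 ≤ max n 0 * 1 :=
      mul_le_mul (le_max_left n 0) (sin_sq_le_one ψ) (sq_nonneg _) (le_max_right n 0)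
    _ < 1 := by simpa using hn

theorem continuous_ellipticK_integrand {m : ℝ} (hm : m < 1) :
    Continuous fun ψ => 1 / √(1 - m * sin ψ ^ 2) :=
  continuous_const.div (by fun_prop) fun ψ => (sqrt_pos.2 (one_sub_mul_sin_sq_pos hm ψ)).ne'

theorem continuous_ellipticPi_integrand {n m : ℝ} (hn : n < 1) (hm : m < 1) :
    Continuous fun ψ => 1 / ((1 - n * sin ψ ^ 2) * √(1 - m * sin ψ ^ 2)) :=
  continuous_const.div (by fun_prop) fun ψ =>
    (mul_pos (one_sub_mul_sin_sq_pos hn ψ) (sqrt_pos.2 (one_sub_mul_sin_sq_pos hm ψ))).ne'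

theorem ellipticK_pos {m : ℝ} (hm : m < 1) : 0 < ellipticK m :=
  intervalIntegral_pos_of_pos ((continuous_ellipticK_integrand hm).intervalIntegrable _ _)
    (fun ψ => one_div_pos.2 (sqrt_pos.2 (one_sub_mul_sin_sq_pos hm ψ))) pi_div_two_pos

theorem integral_one_div_sqrt_mul_add_div {n m : ℝ} (hn : n < 1) (hm : m < 1) (p q : ℝ) :
    ∫ ψ in (0 : ℝ)..(π / 2), 1 / √(1 - m * sin ψ ^ 2) * (p + q / (1 - n * sin ψ ^ 2)) =
      p * ellipticK m + q * ellipticPi n m := by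
  rw [ellipticK, ellipticPi, ← integral_const_mul, ← integral_const_mul,
    ← integral_add (((continuous_ellipticK_integrand hm).const_mul p).intervalIntegrable _ _)
      (((continuous_ellipticPi_integrand hn hm).const_mul q).intervalIntegrable _ _)]
  refine integral_congr fun ψ _ => ?_
  field_simp

/-- The characteristic `n` of the elliptic integrals over `[b, c]` attached to the quartic with
roots `a < b < c < d`. -/
noncomputable def quarticCharacteristic (a b c : ℝ) : ℝ :=
  (c - b) / (c - a)

/-- The parameter `m = s²` of the elliptic integrals over `[b, c]` attached to the quartic with
roots `a < b < c < d`. -/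
noncomputable def quarticParameter (a b c d : ℝ) : ℝ :=
  (c - b) * (d - a) / ((d - b) * (c - a))

/-- The substitution bringing integrals over `[b, c]` involving the square root of the quartic with
roots `a < b < c < d` to Legendre's form. -/
noncomputable def quarticSubst (a b c ψ : ℝ) : ℝ :=
  a + (b - a) / (1 - quarticCharacteristic a b c * sin ψ ^ 2)

variable {a b c d : ℝ}

theorem quarticCharacteristic_lt_one (hab : a < b) (hac : a < c) :
    quarticCharacteristic a b c < 1 := by
  rw [quarticCharacteristic, div_lt_one (by linarith)]
  linarith

theorem quarticCharacteristic_pos (hac : a < c) (hbc : b < c) :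
    0 < quarticCharacteristic a b c :=
  div_pos (by linarith) (by linarith)

theorem quarticParameter_lt_one (hab : a < b) (hbc : b < c) (hcd : c < d) :
    quarticParameter a b c d < 1 := by
  rw [quarticParameter, div_lt_one (mul_pos (by linarith) (by linarith))]
  linear_combination mul_pos (sub_pos.2 hab) (sub_pos.2 hcd)

theorem one_sub_quarticCharacteristic_mul_sin_sq_pos (hab : a < b) (hac : a < c) (ψ : ℝ) :
    0 < 1 - quarticCharacteristic a b c * sin ψ ^ 2 :=
  one_sub_mul_sin_sq_pos (quarticCharacteristic_lt_one hab hac) ψ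

theorem quarticSubst_zero (a b c : ℝ) : quarticSubst a b c 0 = b := by
  simp [quarticSubst]

theorem quarticSubst_pi_div_two (hab : a ≠ b) (hac : a ≠ c) : quarticSubst a b c (π / 2) = c := by
  have hΔ : 1 - (c - b) / (c - a) = (b - a) / (c - a) := by
    rw [one_sub_div (sub_ne_zero.2 hac.symm), sub_sub_sub_cancel_left]
  rw [quarticSubst, quarticCharacteristic, sin_pi_div_two, one_pow, mul_one, hΔ,
    div_div_cancel₀ (sub_ne_zero.2 hab.symm), add_sub_cancel]

theorem hasDerivAt_quarticSubst (hab : a < b) (hac : a < c) (ψ : ℝ) :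
    HasDerivAt (quarticSubst a b c)
      (2 * (b - a) * quarticCharacteristic a b c * sin ψ * cos ψ /
        (1 - quarticCharacteristic a b c * sin ψ ^ 2) ^ 2) ψ := by
  have hΔ := (one_sub_quarticCharacteristic_mul_sin_sq_pos hab hac ψ).ne'
  have hderivΔ : HasDerivAt (fun ψ => 1 - quarticCharacteristic a b c * sin ψ ^ 2)
      (-(quarticCharacteristic a b c * (2 * sin ψ * cos ψ))) ψ := by
    simpa using (((hasDerivAt_sin ψ).pow 2).const_mul (quarticCharacteristic a b c)).const_sub 1
  refine (((hasDerivAt_const ψ (b - a)).div hderivΔ hΔ).const_add a).congr_deriv ?_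
  ring

theorem deriv_quarticSubst_pos (hab : a < b) (hbc : b < c) {ψ : ℝ} (hψ : ψ ∈ Ioo 0 (π / 2)) :
    0 < deriv (quarticSubst a b c) ψ := by
  have hac := hab.trans hbc
  have hn := quarticCharacteristic_pos hac hbc
  have hΔ := one_sub_quarticCharacteristic_mul_sin_sq_pos hab hac ψ
  have hsin : 0 < sin ψ := sin_pos_of_pos_of_lt_pi hψ.1 (by linarith [hψ.2, pi_pos])
  have hcos : 0 < cos ψ := cos_pos_of_mem_Ioo ⟨by linarith [hψ.1, pi_pos], hψ.2⟩
  rw [(hasDerivAt_quarticSubst hab hac ψ).deriv]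
  positivity

theorem quarticSubst_sub_first_root (a b c ψ : ℝ) :
    quarticSubst a b c ψ - a = (b - a) / (1 - quarticCharacteristic a b c * sin ψ ^ 2) :=
  add_sub_cancel_left _ _

theorem quarticSubst_sub_second_root (hab : a < b) (hac : a < c) (ψ : ℝ) :
    quarticSubst a b c ψ - b = (b - a) * quarticCharacteristic a b c * sin ψ ^ 2 /
      (1 - quarticCharacteristic a b c * sin ψ ^ 2) := by
  have hΔ := (one_sub_quarticCharacteristic_mul_sin_sq_pos hab hac ψ).ne'
  rw [quarticSubst]
  field_simp
  ring

theorem third_root_sub_quarticSubst (hab : a < b) (hac : a < c) (ψ : ℝ) :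
    c - quarticSubst a b c ψ = (c - b) * cos ψ ^ 2 /
      (1 - quarticCharacteristic a b c * sin ψ ^ 2) := by
  have hΔ := (one_sub_quarticCharacteristic_mul_sin_sq_pos hab hac ψ).ne'
  have hn : (c - a) * quarticCharacteristic a b c = c - b :=
    mul_div_cancel₀ _ (sub_pos.2 hac).ne'
  rw [quarticSubst, cos_sq']
  field_simp
  linear_combination -sin ψ ^ 2 * hn

theorem fourth_root_sub_quarticSubst (hab : a < b) (hac : a < c) (hbd : b ≠ d) (ψ : ℝ) :
    d - quarticSubst a b c ψ = (d - b) * (1 - quarticParameter a b c d * sin ψ ^ 2) /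
      (1 - quarticCharacteristic a b c * sin ψ ^ 2) := by
  have hΔ := (one_sub_quarticCharacteristic_mul_sin_sq_pos hab hac ψ).ne'
  have hm : (d - b) * quarticParameter a b c d = (d - a) * quarticCharacteristic a b c := by
    have hdb : d - b ≠ 0 := sub_ne_zero.2 hbd.symm
    rw [quarticParameter, quarticCharacteristic]
    field_simp
  rw [quarticSubst]
  field_simp
  linear_combination sin ψ ^ 2 * hm

theorem quartic_comp_quarticSubst (hab : a < b) (hac : a < c) (hbd : b ≠ d) (ψ : ℝ) :
    (quarticSubst a b c ψ - a) * (quarticSubst a b c ψ - b) * (quarticSubst a b c ψ - c) *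
        (quarticSubst a b c ψ - d) =
      (deriv (quarticSubst a b c) ψ / 2) ^ 2 * ((d - b) * (c - a)) *
        (1 - quarticParameter a b c d * sin ψ ^ 2) := by
  have hn : (c - a) * quarticCharacteristic a b c = c - b :=
    mul_div_cancel₀ _ (sub_pos.2 hac).ne'
  rw [← neg_sub c, ← neg_sub d, quarticSubst_sub_first_root, quarticSubst_sub_second_root hab hac,
    third_root_sub_quarticSubst hab hac, fourth_root_sub_quarticSubst hab hac hbd,
    (hasDerivAt_quarticSubst hab hac ψ).deriv, ← hn]
  field_simp

theorem deriv_quarticSubst_mul_one_div_sqrt (hab : a < b) (hbc : b < c) (hcd : c < d) {ψ : ℝ}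
    (hψ : ψ ∈ Ioo 0 (π / 2)) :
    deriv (quarticSubst a b c) ψ *
        (1 / √((quarticSubst a b c ψ - a) * (quarticSubst a b c ψ - b) *
          (quarticSubst a b c ψ - c) * (quarticSubst a b c ψ - d))) =
      2 / √((d - b) * (c - a)) * (1 / √(1 - quarticParameter a b c d * sin ψ ^ 2)) := by
  have hac := hab.trans hbc
  have hbd := hbc.trans hcd
  have hderiv := deriv_quarticSubst_pos hab hbc hψ
  have hscale : 0 ≤ (d - b) * (c - a) := mul_nonneg (sub_pos.2 hbd).le (sub_pos.2 hac).le
  rw [quartic_comp_quarticSubst hab hac hbd.ne, sqrt_mul (mul_nonneg (sq_nonneg _) hscale),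
    sqrt_mul (sq_nonneg _), sqrt_sq (half_pos hderiv).le]
  field_simp

theorem integral_one_div_sqrt_quartic_smul {E : Type*} [NormedAddCommGroup E] [NormedSpace ℝ E]
    (hab : a < b) (hbc : b < c) (hcd : c < d) (h : ℝ → E) :
    ∫ x in b..c, (1 / √((x - a) * (x - b) * (x - c) * (x - d))) • h x =
      (2 / √((d - b) * (c - a))) • ∫ ψ in (0 : ℝ)..(π / 2),
        (1 / √(1 - quarticParameter a b c d * sin ψ ^ 2)) • h (quarticSubst a b c ψ) := by
  have hac := hab.trans hbc
  have hdiff ψ : HasDerivAt (quarticSubst a b c) (deriv (quarticSubst a b c) ψ) ψ :=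
    (hasDerivAt_quarticSubst hab hac ψ).differentiableAt.hasDerivAt
  have hsubst := integral_deriv_smul_comp_of_deriv_nonneg (a := 0) (b := π / 2)
    (g := fun x => (1 / √((x - a) * (x - b) * (x - c) * (x - d))) • h x)
    (fun ψ _ => (hdiff ψ).continuousAt.continuousWithinAt) (fun ψ _ => hdiff ψ)
    (fun ψ hψ => (deriv_quarticSubst_pos hab hbc (by simpa [pi_div_two_pos.le] using hψ)).le)
  rw [quarticSubst_zero, quarticSubst_pi_div_two hab.ne hac.ne] at hsubst
  rw [← hsubst, ← integral_smul]
  refine integral_congr_Ioo_of_le pi_div_two_pos.le fun ψ hψ => ?_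
  simp only [Function.comp_apply, smul_smul, deriv_quarticSubst_mul_one_div_sqrt hab hbc hcd hψ]

theorem integral_one_div_sqrt_quartic (hab : a < b) (hbc : b < c) (hcd : c < d) :
    ∫ x in b..c, 1 / √((x - a) * (x - b) * (x - c) * (x - d)) =
      2 / √((d - b) * (c - a)) * ellipticK (quarticParameter a b c d) := by
  simpa only [ellipticK, smul_eq_mul, mul_one] using
    integral_one_div_sqrt_quartic_smul hab hbc hcd fun _ => (1 : ℝ)

theorem integral_id_div_sqrt_quartic (hab : a < b) (hbc : b < c) (hcd : c < d) :
    ∫ x in b..c, x / √((x - a) * (x - b) * (x - c) * (x - d)) =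
      2 / √((d - b) * (c - a)) * (a * ellipticK (quarticParameter a b c d) +
        (b - a) * ellipticPi (quarticCharacteristic a b c) (quarticParameter a b c d)) := by
  rw [← integral_one_div_sqrt_mul_add_div (quarticCharacteristic_lt_one hab (hab.trans hbc))
    (quarticParameter_lt_one hab hbc hcd)]
  simpa only [quarticSubst, smul_eq_mul, one_div_mul_eq_div] using
    integral_one_div_sqrt_quartic_smul hab hbc hcd fun x => x

theorem integral_id_div_sqrt_quartic_div_integral_one_div_sqrt_quartic
    (hab : a < b) (hbc : b < c) (hcd : c < d) :
    (∫ x in b..c, x / √((x - a) * (x - b) * (x - c) * (x - d))) /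
        (∫ x in b..c, 1 / √((x - a) * (x - b) * (x - c) * (x - d))) =
      a + (b - a) * ellipticPi (quarticCharacteristic a b c) (quarticParameter a b c d) /
        ellipticK (quarticParameter a b c d) := by
  have hK := (ellipticK_pos (quarticParameter_lt_one hab hbc hcd)).ne'
  have hscale : 2 / √((d - b) * (c - a)) ≠ 0 :=
    (div_pos two_pos (sqrt_pos.2 (mul_pos (by linarith) (by linarith)))).ne'
  rw [integral_id_div_sqrt_quartic hab hbc hcd, integral_one_div_sqrt_quartic hab hbc hcd,
    mul_div_mul_left _ _ hscale, add_div, mul_div_cancel_right₀ _ hK]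

end EllipticIntegral

/-- explicit elliptic form of the normalization constant
`γ₁ = −I₁/I₀ = ν − (u¹+ν)·Π(ρ², s)/K(s)`, with `Π` the complete elliptic integral of the
third kind, `s² = (u²−u¹)(u³+ν)/((u³−u¹)(u²+ν))` and `ρ² = (u²−u¹)/(u²+ν)`. -/
theorem stmt_6 (ν u1 u2 u3 : ℝ) (h0 : -ν < u1) (h12 : u1 < u2) (h23 : u2 < u3)
    (R : ℝ → ℝ) (hR : ∀ l, R l = (l + ν) * (l - u1) * (l - u2) * (l - u3))
    (I0 I1 : ℝ)
    (hI0 : I0 = ∫ l in u1..u2, 1 / Real.sqrt (R l))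
    (hI1 : I1 = ∫ l in u1..u2, l / Real.sqrt (R l))
    (γ1 : ℝ) (hγ1 : γ1 = -I1 / I0)
    (ssq : ℝ) (hssq : ssq = (u2 - u1) * (u3 + ν) / ((u3 - u1) * (u2 + ν)))
    (ρsq : ℝ) (hρsq : ρsq = (u2 - u1) / (u2 + ν))
    (K : ℝ)
    (hK : K = ∫ ψ in (0:ℝ)..(Real.pi / 2), 1 / Real.sqrt (1 - ssq * Real.sin ψ ^ 2))
    (Pi3 : ℝ)
    (hPi3 : Pi3 = ∫ ψ in (0:ℝ)..(Real.pi / 2),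
        1 / ((1 - ρsq * Real.sin ψ ^ 2) * Real.sqrt (1 - ssq * Real.sin ψ ^ 2))) :
    γ1 = ν - (u1 + ν) * Pi3 / K := by
  have hssq_eq : ssq = quarticParameter (-ν) u1 u2 u3 := by
    rw [hssq, quarticParameter, sub_neg_eq_add, sub_neg_eq_add]
  have hρsq_eq : ρsq = quarticCharacteristic (-ν) u1 u2 := by
    rw [hρsq, quarticCharacteristic, sub_neg_eq_add]
  have hratio := integral_id_div_sqrt_quartic_div_integral_one_div_sqrt_quartic h0 h12 h23
  simp only [sub_neg_eq_add, ← hR, ← hssq_eq, ← hρsq_eq] at hratio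
  rw [← hI0, ← hI1, ellipticK, ellipticPi, ← hK, ← hPi3] at hratio
  rw [hγ1, neg_div, hratio]
  ring
end

section
/- Let ν ∈ ℝ and let u : ℝ² → ℝ be smooth. Set m = u − u_{xx} and suppose m + ν > 0 everywhere and m_t = −2m u_x − u m_x − 2ν u_x (the Camassa–Holm equation). Then ρ := √(m + ν) satisfies ρ_t = −(uρ)_x; i.e., the substitution ρ² = m + ν transforms the Camassa–Holm equation into the associated Camassa–Holm system ρ_t = −(uρ)_x, ρ² = u − u_{xx} + ν. -/
/-!
In terms of `q = m + ν` the Camassa–Holm equation reads `q_t = -2 q u_x - u q_x`, with `ν` absorbed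
into `q`. Where `q > 0`, the chain rule gives `ρ_t = q_t / (2ρ)` and
`(uρ)_x = u_x ρ + u q_x / (2ρ)` for `ρ = √q`; multiplying `ρ_t = -(uρ)_x` by `2ρ` and using `ρ² = q`
recovers that equation, so the two are equivalent at each point. Since `m` involves two derivatives
of `u`, class `C³` suffices for `q` to be differentiable.
-/

section PartialDerivatives

variable {𝕜 E F : Type*} [NontriviallyNormedField 𝕜] [NormedAddCommGroup E] [NormedSpace 𝕜 E]
  [NormedAddCommGroup F] [NormedSpace 𝕜 F]

theorem contDiffAt_deriv_fst {f : 𝕜 → E → F} {p : 𝕜 × E} {k n : WithTop ℕ∞}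
    (hf : ContDiffAt 𝕜 n (fun p : 𝕜 × E => f p.1 p.2) p) (hkn : k + 1 ≤ n) :
    ContDiffAt 𝕜 k (fun p : 𝕜 × E => deriv (fun x => f x p.2) p.1) p := by
  have hf' : ContDiffAt 𝕜 n (fun y : (𝕜 × E) × 𝕜 => f y.2 y.1.2) (p, p.1) :=
    hf.comp (f := fun y : (𝕜 × E) × 𝕜 => (y.2, y.1.2)) (p, p.1) (by fun_prop)
  simp only [← fderiv_apply_one_eq_deriv]
  exact (ContDiffAt.fderiv (f := fun (p : 𝕜 × E) x => f x p.2) hf' contDiffAt_fst hkn).clm_apply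
    contDiffAt_const

theorem contDiffAt_sub_deriv_deriv_fst {f : 𝕜 → E → F} {p : 𝕜 × E} {k n : WithTop ℕ∞}
    (hf : ContDiffAt 𝕜 n (fun p : 𝕜 × E => f p.1 p.2) p) (hkn : k + 2 ≤ n) :
    ContDiffAt 𝕜 k
      (fun p : 𝕜 × E => f p.1 p.2 - deriv (fun x₂ => deriv (fun x₁ => f x₁ p.2) x₂) p.1) p := by
  have hkn' : k + 1 + 1 ≤ n := by rwa [add_assoc, one_add_one_eq_two]
  have hfx : ContDiffAt 𝕜 (k + 1) (fun p : 𝕜 × E => deriv (fun x => f x p.2) p.1) p :=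
    contDiffAt_deriv_fst hf hkn'
  exact (hf.of_le (le_self_add.trans hkn)).sub
    (contDiffAt_deriv_fst (f := fun x y => deriv (fun x' => f x' y) x) hfx le_rfl)

end PartialDerivatives

theorem deriv_sqrt_eq_neg_deriv_mul_sqrt_iff {u q : ℝ → ℝ → ℝ} {x t : ℝ}
    (hu : DifferentiableAt ℝ (fun x' => u x' t) x)
    (hqx : DifferentiableAt ℝ (fun x' => q x' t) x)
    (hqt : DifferentiableAt ℝ (fun t' => q x t') t) (hpos : 0 < q x t) :
    deriv (fun t' => √(q x t')) t = -deriv (fun x' => u x' t * √(q x' t)) x ↔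
      deriv (fun t' => q x t') t =
        -2 * q x t * deriv (fun x' => u x' t) x - u x t * deriv (fun x' => q x' t) x := by
  have hρ_ne : √(q x t) ≠ 0 := Real.sqrt_ne_zero'.2 hpos
  have hρ_sq : √(q x t) ^ 2 = q x t := Real.sq_sqrt hpos.le
  have hρt : deriv (fun t' => √(q x t')) t = deriv (fun t' => q x t') t / (2 * √(q x t)) :=
    deriv_sqrt hqt hpos.ne'
  have hρx : deriv (fun x' => u x' t * √(q x' t)) x =
      deriv (fun x' => u x' t) x * √(q x t) +
        u x t * (deriv (fun x' => q x' t) x / (2 * √(q x t))) := by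
    rw [deriv_fun_mul hu (hqx.sqrt hpos.ne'), deriv_sqrt hqx hpos.ne']
  have hflux : -deriv (fun x' => u x' t * √(q x' t)) x =
      (-2 * q x t * deriv (fun x' => u x' t) x - u x t * deriv (fun x' => q x' t) x) /
        (2 * √(q x t)) := by
    rw [hρx, eq_div_iff (mul_ne_zero two_ne_zero hρ_ne)]
    field_simp
    rw [hρ_sq]
    ring
  rw [hρt, hflux, div_left_inj' (mul_ne_zero two_ne_zero hρ_ne)]

theorem stmt_8_general {ν : ℝ} {u m ρ : ℝ → ℝ → ℝ} {x t : ℝ}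
    (hu : ContDiffAt ℝ 3 (fun p : ℝ × ℝ => u p.1 p.2) (x, t))
    (hm : ∀ x t, m x t = u x t - deriv (fun x₂ => deriv (fun x₁ => u x₁ t) x₂) x)
    (hρ : ∀ x t, ρ x t = √(m x t + ν)) (hpos : 0 < m x t + ν) :
    deriv (fun t' => ρ x t') t = -deriv (fun x' => u x' t * ρ x' t) x ↔
      deriv (fun t' => m x t') t =
        -2 * m x t * deriv (fun x' => u x' t) x - u x t * deriv (fun x' => m x' t) x
          - 2 * ν * deriv (fun x' => u x' t) x := by
  have hm_diff : DifferentiableAt ℝ (fun p : ℝ × ℝ => m p.1 p.2) (x, t) := by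
    simp only [hm]
    exact (contDiffAt_sub_deriv_deriv_fst (k := 1) hu (by norm_num)).differentiableAt one_ne_zero
  have hux : DifferentiableAt ℝ (fun x' => u x' t) x :=
    (hu.differentiableAt three_ne_zero).comp x (f := fun x' => (x', t)) (by fun_prop)
  have hmx : DifferentiableAt ℝ (fun x' => m x' t) x :=
    hm_diff.comp x (f := fun x' => (x', t)) (by fun_prop)
  have hmt : DifferentiableAt ℝ (fun t' => m x t') t :=
    hm_diff.comp t (f := fun t' => (x, t')) (by fun_prop)
  simp only [hρ]
  rw [deriv_sqrt_eq_neg_deriv_mul_sqrt_iff (q := fun x t => m x t + ν) hux (hmx.add_const ν)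
    (hmt.add_const ν) hpos, deriv_add_const, deriv_add_const]
  exact Eq.congr_right (by ring)

/-- the substitution `ρ = √(m+ν)` transforms the Camassa–Holm equation
`m_t = −2mu_x − um_x − 2νu_x`, `m = u − u_{xx}`, into the associated system
`ρ_t = −(uρ)_x`. -/
theorem stmt_8 (ν : ℝ) (u : ℝ → ℝ → ℝ)
    (hu : ContDiff ℝ (⊤ : ℕ∞) (fun p : ℝ × ℝ => u p.1 p.2))
    (m : ℝ → ℝ → ℝ)
    (hm : ∀ x t, m x t = u x t - deriv (fun x₂ => deriv (fun x₁ => u x₁ t) x₂) x)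
    (hpos : ∀ x t, 0 < m x t + ν)
    (hCH : ∀ x t, deriv (fun t' => m x t') t =
      -2 * m x t * deriv (fun x' => u x' t) x - u x t * deriv (fun x' => m x' t) x
        - 2 * ν * deriv (fun x' => u x' t) x)
    (ρ : ℝ → ℝ → ℝ) (hρ : ∀ x t, ρ x t = Real.sqrt (m x t + ν)) :
    ∀ x t, deriv (fun t' => ρ x t') t = - deriv (fun x' => u x' t * ρ x' t) x := fun x t =>
  (stmt_8_general (contDiff_infty.1 hu 3).contDiffAt hm hρ (hpos x t)).2 (hCH x t)
end

section
/- Let u, ρ : ℝ² → ℝ be smooth with ρ > 0, satisfying the associated Camassa–Holm system ρ_t = −(uρ)_x and ρ² = u − u_{xx} + ν. Let y : ℝ² → ℝ be smooth with y_x = ρ and y_t = −uρ (the reciprocal transformation dy = ρ dx − uρ dt, dτ = dt). Suppose r, v : ℝ² → ℝ are smooth functions of the new variables (y, τ) such that ρ(x,t) = r(y(x,t), t) and u(x,t) = v(y(x,t), t) for all (x,t). Then at every point of the image: v = r² − ν − r_{yτ} + r_τ r_y / r, and (1/r)_τ = 2 r r_y − ( r (log r)_{yτ} )_y. -/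
/-!
In the new variables `∂_x = r ∂_y` and `∂_t = ∂_τ - v r ∂_y`, so the conservation law
`ρ_t = -(uρ)_x` becomes `r_τ = -r² v_y`. Read as `(1/r)_τ = v_y` it is half of the second identity;
read as `u_x = r v_y = -(log r)_τ` it gives `u_xx = -r (log r)_{yτ}`, and the constraint
`ρ² = u - u_xx + ν` becomes `v = r² - ν - r (log r)_{yτ}`. Expanding the logarithm gives the first
identity. As `y_x ≠ 0`, the constraint holds on a neighbourhood of each value of `y(·, t)`, so it
may be differentiated in `y`, which gives the other half of the second identity.
-/

open Filter Function Set Topology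

section PartialDerivatives

variable {𝕜 F : Type*} [NontriviallyNormedField 𝕜] [NormedAddCommGroup F] [NormedSpace 𝕜 F]
  {f : 𝕜 → 𝕜 → F}

theorem hasDerivAt_fst_of_uncurry {a t : 𝕜} (hf : DifferentiableAt 𝕜 (uncurry f) (a, t)) :
    HasDerivAt (f · t) (fderiv 𝕜 (uncurry f) (a, t) (1, 0)) a :=
  hf.hasFDerivAt.comp_hasDerivAt (f := (·, t)) a ((hasDerivAt_id a).prodMk (hasDerivAt_const a t))

theorem hasDerivAt_snd_of_uncurry {a t : 𝕜} (hf : DifferentiableAt 𝕜 (uncurry f) (a, t)) :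
    HasDerivAt (f a) (fderiv 𝕜 (uncurry f) (a, t) (0, 1)) t :=
  hf.hasFDerivAt.comp_hasDerivAt (f := (a, ·)) t ((hasDerivAt_const t a).prodMk (hasDerivAt_id t))

theorem hasDerivAt_comp_curve {g h : 𝕜 → 𝕜} {g' h' s : 𝕜}
    (hf : DifferentiableAt 𝕜 (uncurry f) (g s, h s))
    (hg : HasDerivAt g g' s) (hh : HasDerivAt h h' s) :
    HasDerivAt (fun s => f (g s) (h s))
      (g' • deriv (f · (h s)) (g s) + h' • deriv (f (g s)) (h s)) s := by
  have hsplit : fderiv 𝕜 (uncurry f) (g s, h s) (g', h') =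
      g' • deriv (f · (h s)) (g s) + h' • deriv (f (g s)) (h s) := by
    rw [(hasDerivAt_fst_of_uncurry hf).deriv, (hasDerivAt_snd_of_uncurry hf).deriv,
      ← map_smul, ← map_smul, ← map_add]
    simp
  exact hsplit ▸ hf.hasFDerivAt.comp_hasDerivAt (f := fun s => (g s, h s)) s (hg.prodMk hh)

theorem deriv_fst_eventuallyEq_fderiv {p : 𝕜 × 𝕜} (hf : ContDiffAt 𝕜 1 (uncurry f) p) :
    uncurry (fun a t => deriv (f · t) a) =ᶠ[𝓝 p] fun q => fderiv 𝕜 (uncurry f) q (1, 0) := by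
  filter_upwards [hf.eventually (by simp)] with q hq
  exact (hasDerivAt_fst_of_uncurry (hq.differentiableAt (by simp))).deriv

theorem deriv_snd_eventuallyEq_fderiv {p : 𝕜 × 𝕜} (hf : ContDiffAt 𝕜 1 (uncurry f) p) :
    uncurry (fun a t => deriv (f a) t) =ᶠ[𝓝 p] fun q => fderiv 𝕜 (uncurry f) q (0, 1) := by
  filter_upwards [hf.eventually (by simp)] with q hq
  exact (hasDerivAt_snd_of_uncurry (hq.differentiableAt (by simp))).deriv

theorem differentiableAt_uncurry_deriv_fst {p : 𝕜 × 𝕜} (hf : ContDiffAt 𝕜 2 (uncurry f) p) :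
    DifferentiableAt 𝕜 (uncurry fun a t => deriv (f · t) a) p :=
  ((hf.fderiv_right (m := 1) (by norm_num)).differentiableAt (by simp)).clm_apply
    (differentiableAt_const _) |>.congr_of_eventuallyEq
      (deriv_fst_eventuallyEq_fderiv (hf.of_le (by norm_num)))

theorem differentiableAt_uncurry_deriv_snd {p : 𝕜 × 𝕜} (hf : ContDiffAt 𝕜 2 (uncurry f) p) :
    DifferentiableAt 𝕜 (uncurry fun a t => deriv (f a) t) p :=
  ((hf.fderiv_right (m := 1) (by norm_num)).differentiableAt (by simp)).clm_apply
    (differentiableAt_const _) |>.congr_of_eventuallyEq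
      (deriv_snd_eventuallyEq_fderiv (hf.of_le (by norm_num)))

theorem deriv_fst_deriv_snd_comm [IsRCLikeNormedField 𝕜] {a t : 𝕜}
    (hf : ContDiffAt 𝕜 2 (uncurry f) (a, t)) :
    deriv (fun a' => deriv (f a') t) a = deriv (fun t' => deriv (f · t') a) t := by
  have hf₁ : ContDiffAt 𝕜 1 (uncurry f) (a, t) := hf.of_le (by norm_num)
  have hf' : DifferentiableAt 𝕜 (fderiv 𝕜 (uncurry f)) (a, t) :=
    (hf.fderiv_right (m := 1) (by norm_num)).differentiableAt (by simp)
  have fderiv_apply_const (w z : 𝕜 × 𝕜) :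
      fderiv 𝕜 (fun q => fderiv 𝕜 (uncurry f) q w) (a, t) z =
        fderiv 𝕜 (fderiv 𝕜 (uncurry f)) (a, t) z w := by
    simp [fderiv_clm_apply hf' (differentiableAt_const w)]
  rw [(hasDerivAt_fst_of_uncurry (differentiableAt_uncurry_deriv_snd hf)).deriv,
    (hasDerivAt_snd_of_uncurry (differentiableAt_uncurry_deriv_fst hf)).deriv,
    (deriv_snd_eventuallyEq_fderiv hf₁).fderiv_eq, (deriv_fst_eventuallyEq_fderiv hf₁).fderiv_eq,
    fderiv_apply_const, fderiv_apply_const]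
  exact hf.isSymmSndFDerivAt (by simp) (1, 0) (0, 1)

end PartialDerivatives

theorem mul_deriv_deriv_log {f : ℝ → ℝ → ℝ} {a t : ℝ} (hf : ContDiffAt ℝ 2 (uncurry f) (a, t))
    (h0 : f a t ≠ 0) :
    f a t * deriv (fun τ => deriv (fun a' => Real.log (f a' τ)) a) t =
      deriv (fun τ => deriv (f · τ) a) t - deriv (f a) t * deriv (f · t) a / f a t := by
  have hlog : (fun τ => deriv (fun a' => Real.log (f a' τ)) a) =ᶠ[𝓝 t]
      fun τ => deriv (f · τ) a / f a τ := by
    have hnhds := (Continuous.prodMk_right a).continuousAt.eventually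
      ((hf.eventually (by simp)).and (hf.continuousAt.eventually_ne h0))
    filter_upwards [hnhds] with τ ⟨hτ, hτ0⟩
    exact deriv.log (hasDerivAt_fst_of_uncurry
      (hτ.differentiableAt (by simp))).differentiableAt hτ0
  have hft := hasDerivAt_snd_of_uncurry (hf.differentiableAt (by simp))
  have hfat := hasDerivAt_snd_of_uncurry (differentiableAt_uncurry_deriv_fst hf)
  rw [hlog.deriv_eq, deriv_fun_div hfat.differentiableAt hft.differentiableAt h0]
  field_simp

theorem range_mem_nhds_of_hasDerivAt {𝕜 : Type*} [RCLike 𝕜] {f f' : 𝕜 → 𝕜} {x : 𝕜}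
    (hf : ∀ᶠ z in 𝓝 x, HasDerivAt f (f' z) z) (hf' : ContinuousAt f' x) (h0 : f' x ≠ 0) :
    range f ∈ 𝓝 (f x) := by
  have hstrict := hasStrictDerivAt_of_hasDerivAt_of_continuousAt hf hf'
  exact hstrict.map_nhds_eq h0 ▸ range_mem_map

theorem deriv_snd_eq_of_conservation_law {𝕜 : Type*} [NontriviallyNormedField 𝕜]
    {r y : 𝕜 → 𝕜 → 𝕜} {w : 𝕜 → 𝕜} {x t : 𝕜}
    (hr : DifferentiableAt 𝕜 (uncurry r) (y x t, t)) (hw : DifferentiableAt 𝕜 w (y x t))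
    (hyx : HasDerivAt (y · t) (r (y x t) t) x)
    (hyt : HasDerivAt (y x) (-(w (y x t) * r (y x t) t)) t)
    (hlaw : deriv (fun t' => r (y x t') t') t = -deriv (fun x' => w (y x' t) * r (y x' t) t) x) :
    deriv (r (y x t)) t = -(r (y x t) t ^ 2 * deriv w (y x t)) := by
  have hρt : deriv (fun t' => r (y x t') t') t =
      -(w (y x t) * r (y x t) t) * deriv (r · t) (y x t) + deriv (r (y x t)) t := by
    simpa using (hasDerivAt_comp_curve hr hyt (hasDerivAt_id t)).deriv
  have hρx : HasDerivAt (fun x' => r (y x' t) t) (deriv (r · t) (y x t) * r (y x t) t) x :=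
    (hasDerivAt_fst_of_uncurry hr).differentiableAt.hasDerivAt.comp (h₂ := (r · t)) x hyx
  have hux : HasDerivAt (fun x' => w (y x' t)) (deriv w (y x t) * r (y x t) t) x :=
    hw.hasDerivAt.comp x hyx
  rw [hρt, (hux.fun_mul hρx).deriv] at hlaw
  linear_combination hlaw

theorem deriv_deriv_comp_eq_neg_mul_deriv_deriv_log {r : ℝ → ℝ → ℝ} {w Y : ℝ → ℝ} {t : ℝ}
    (hr : ∀ x, ContDiffAt ℝ 2 (uncurry r) (Y x, t)) (hw : ∀ x, DifferentiableAt ℝ w (Y x))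
    (hY : ∀ x, HasDerivAt Y (r (Y x) t) x) (h0 : ∀ x, r (Y x) t ≠ 0)
    (hrt : ∀ x, deriv (r (Y x)) t = -(r (Y x) t ^ 2 * deriv w (Y x))) (x : ℝ) :
    deriv (deriv fun x' => w (Y x')) x =
      -(r (Y x) t * deriv (fun τ => deriv (fun a => Real.log (r a τ)) (Y x)) t) := by
  have hlog : ContDiffAt ℝ 2 (uncurry fun a τ => Real.log (r a τ)) (Y x, t) := (hr x).log (h0 x)
  have hux : (deriv fun x' => w (Y x')) = fun x' => -deriv (fun τ => Real.log (r (Y x') τ)) t := by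
    funext x'
    have hrτ := (hasDerivAt_snd_of_uncurry ((hr x').differentiableAt (by simp))).differentiableAt
    have hwY : deriv (fun x' => w (Y x')) x' = deriv w (Y x') * r (Y x') t :=
      ((hw x').hasDerivAt.comp x' (hY x')).deriv
    rw [hwY, deriv.log hrτ (h0 x'), hrt x']
    field_simp [h0 x']
  have hlogτ := (hasDerivAt_fst_of_uncurry
    (differentiableAt_uncurry_deriv_snd hlog)).differentiableAt.hasDerivAt.comp x (hY x)
  rw [hux, ← deriv_fst_deriv_snd_comm hlog, mul_comm]
  exact hlogτ.neg.deriv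

theorem deriv_one_div_eq_of_eventuallyEq {𝕜 : Type*} [NontriviallyNormedField 𝕜]
    {r : 𝕜 → 𝕜 → 𝕜} {w g : 𝕜 → 𝕜} {ν a t : 𝕜}
    (hra : DifferentiableAt 𝕜 (r · t) a) (hrτ : DifferentiableAt 𝕜 (r a) t)
    (hw : DifferentiableAt 𝕜 w a) (h0 : r a t ≠ 0)
    (hrt : deriv (r a) t = -(r a t ^ 2 * deriv w a))
    (hg : g =ᶠ[𝓝 a] fun a' => r a' t ^ 2 - ν - w a') :
    deriv (fun τ => 1 / r a τ) t = 2 * r a t * deriv (r · t) a - deriv g a := by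
  have hinv : deriv (fun τ => 1 / r a τ) t = deriv w a := by
    simp only [one_div]
    rw [deriv_fun_inv'' hrτ h0, hrt]
    field_simp
  have hga := ((hra.hasDerivAt.fun_pow 2).sub_const ν).fun_sub hw.hasDerivAt
  rw [hinv, hg.deriv_eq, hga.deriv]
  ring

theorem stmt_9_general {ν : ℝ} {u ρ y r v : ℝ → ℝ → ℝ}
    (hy : ∀ x, Differentiable ℝ (y x))
    (hr : ∀ x t, ContDiffAt ℝ 2 (uncurry r) (y x t, t))
    (hv : ∀ x t, DifferentiableAt ℝ (v · t) (y x t))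
    (hρpos : ∀ x t, 0 < ρ x t)
    (hsys1 : ∀ x t, deriv (fun t' => ρ x t') t = -deriv (fun x' => u x' t * ρ x' t) x)
    (hsys2 : ∀ x t, (ρ x t) ^ 2
      = u x t - deriv (fun x₂ => deriv (fun x₁ => u x₁ t) x₂) x + ν)
    (hyx : ∀ x t, deriv (fun x' => y x' t) x = ρ x t)
    (hyt : ∀ x t, deriv (fun t' => y x t') t = -(u x t * ρ x t))
    (hrρ : ∀ x t, ρ x t = r (y x t) t)
    (hvu : ∀ x t, u x t = v (y x t) t) (x t : ℝ) :
    (v (y x t) t =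
      (r (y x t) t) ^ 2 - ν
        - deriv (fun τ => deriv (fun a => r a τ) (y x t)) t
        + deriv (fun τ => r (y x t) τ) t * deriv (fun a => r a t) (y x t) / r (y x t) t)
    ∧ (deriv (fun τ => 1 / r (y x t) τ) t =
        2 * r (y x t) t * deriv (fun a => r a t) (y x t)
          - deriv (fun a => r a t *
              deriv (fun τ => deriv (fun a' => Real.log (r a' τ)) a) t) (y x t)) := by
  obtain rfl : ρ = fun x t => r (y x t) t := funext₂ hrρ
  obtain rfl : u = fun x t => v (y x t) t := funext₂ hvu
  beta_reduce at hρpos hsys1 hsys2 hyx hyt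
  have h0 (x) : r (y x t) t ≠ 0 := (hρpos x t).ne'
  have hY (x) : HasDerivAt (y · t) (r (y x t) t) x :=
    hyx x t ▸ (differentiableAt_of_deriv_ne_zero (hyx x t ▸ h0 x)).hasDerivAt
  have hr' (x) : DifferentiableAt ℝ (uncurry r) (y x t, t) := (hr x t).differentiableAt (by simp)
  have hrt (x) : deriv (r (y x t)) t = -(r (y x t) t ^ 2 * deriv (v · t) (y x t)) :=
    deriv_snd_eq_of_conservation_law (hr' x) (hv x t) (hY x)
      (hyt x t ▸ (hy x t).hasDerivAt) (hsys1 x t)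
  have hconstraint (x) : r (y x t) t *
      deriv (fun τ => deriv (fun a => Real.log (r a τ)) (y x t)) t =
        r (y x t) t ^ 2 - ν - v (y x t) t := by
    have huxx := deriv_deriv_comp_eq_neg_mul_deriv_deriv_log (hr · t) (hv · t) hY h0 hrt x
    linear_combination huxx - hsys2 x t
  refine ⟨by linear_combination hconstraint x - mul_deriv_deriv_log (hr x t) (h0 x), ?_⟩
  have hra := (hasDerivAt_fst_of_uncurry (hr' x)).differentiableAt
  have hrτ := (hasDerivAt_snd_of_uncurry (hr' x)).differentiableAt
  have hrange : range (y · t) ∈ 𝓝 (y x t) :=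
    range_mem_nhds_of_hasDerivAt (f := (y · t)) (.of_forall hY)
      (hra.continuousAt.comp (f := (y · t)) (hY x).continuousAt) (h0 x)
  exact deriv_one_div_eq_of_eventuallyEq hra hrτ (hv x t) (h0 x) (hrt x)
    (mem_of_superset hrange (range_subset_iff.2 hconstraint))

/-- the reciprocal transformation `dy = ρdx − uρdt`, `dτ = dt` maps the
associated Camassa–Holm system `ρ_t = −(uρ)_x`, `ρ² = u − u_{xx} + ν` to the system
`u = ρ² − ν − ρ_{yτ} + ρ_τρ_y/ρ`, `(1/ρ)_τ = 2ρρ_y − (ρ(log ρ)_{yτ})_y` in the new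
variables. Here `r, v` denote `ρ, u` expressed as functions of `(y, τ)`. -/
theorem stmt_9 (ν : ℝ) (u ρ y r v : ℝ → ℝ → ℝ)
    (hu : ContDiff ℝ (⊤ : ℕ∞) (fun p : ℝ × ℝ => u p.1 p.2))
    (hρ : ContDiff ℝ (⊤ : ℕ∞) (fun p : ℝ × ℝ => ρ p.1 p.2))
    (hy : ContDiff ℝ (⊤ : ℕ∞) (fun p : ℝ × ℝ => y p.1 p.2))
    (hr : ContDiff ℝ (⊤ : ℕ∞) (fun p : ℝ × ℝ => r p.1 p.2))
    (hv : ContDiff ℝ (⊤ : ℕ∞) (fun p : ℝ × ℝ => v p.1 p.2))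
    (hρpos : ∀ x t, 0 < ρ x t)
    (hsys1 : ∀ x t, deriv (fun t' => ρ x t') t = - deriv (fun x' => u x' t * ρ x' t) x)
    (hsys2 : ∀ x t, (ρ x t) ^ 2
      = u x t - deriv (fun x₂ => deriv (fun x₁ => u x₁ t) x₂) x + ν)
    (hyx : ∀ x t, deriv (fun x' => y x' t) x = ρ x t)
    (hyt : ∀ x t, deriv (fun t' => y x t') t = - (u x t * ρ x t))
    (hrρ : ∀ x t, ρ x t = r (y x t) t)
    (hvu : ∀ x t, u x t = v (y x t) t) :
    ∀ x t,
      (v (y x t) t =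
        (r (y x t) t) ^ 2 - ν
          - deriv (fun τ => deriv (fun a => r a τ) (y x t)) t
          + deriv (fun τ => r (y x t) τ) t * deriv (fun a => r a t) (y x t) / r (y x t) t)
      ∧ (deriv (fun τ => 1 / r (y x t) τ) t =
          2 * r (y x t) t * deriv (fun a => r a t) (y x t)
            - deriv (fun a => r a t *
                deriv (fun τ => deriv (fun a' => Real.log (r a' τ)) a) t) (y x t)) :=
  stmt_9_general (fun x => (hy.comp (contDiff_prodMk_right x)).differentiable (by simp))
    (fun _ _ => (contDiff_infty.1 hr 2).contDiffAt)
    (fun _ t => (hv.comp (contDiff_prodMk_left t)).differentiable (by simp) _)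
    hρpos hsys1 hsys2 hyx hyt hrρ hvu
end

section
/- Let ρ : ℝ² → ℝ be smooth with ρ > 0 (variables (y, τ)), and define U = (ρ_y² − 2ρρ_{yy} − 1)/(2ρ²). Then the identity ρ_{yyy} + 2Uρ_y + U_y ρ = 0 holds everywhere. Consequently, if in addition U_τ = −2ρ_y (equivalently, ((ρ_y² − 2ρρ_{yy} − 1)/(4ρ²))_τ = −ρ_y), then U_{τyy} + 2U U_τ − 2ρ U_y = 0; that is, U solves the first negative flow of the KdV hierarchy (∂_y² + 2U + U_y ∂_y^{-1}) U_τ = 0 with ∂_y^{-1} U_τ = −2ρ. -/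
/-!
The expression `r'² - 2 r r'' - 2 u r²` is a first integral of the linear equation
`r''' + 2 u r' + u' r = 0`: its derivative is `-2 r (r''' + 2 u r' + u' r)`. Solving
`r'² - 2 r r'' - 2 u r² = c` for `u`, with `c` constant in `y`, gives the quotient defining `U`
(for `c = 1`), so every nowhere vanishing `ρ` solves the linear equation for its own `U`.
When `U_τ = -2 ρ_y`, the left-hand side of the negative KdV flow is `-2` times that of the linear
equation.
-/

open scoped Topology

namespace NegativeKdV

variable {𝕜 : Type*} [NontriviallyNormedField 𝕜] {u r w : 𝕜 → 𝕜} {c y : 𝕜}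

/-- The operator `∂³ + 2 u ∂ + u'` applied to `r`. It annihilates the products of two solutions of
`ψ'' + (u / 2) ψ = 0`, whence the name. -/
noncomputable def squaredEigenfunctionOp (u r : 𝕜 → 𝕜) (y : 𝕜) : 𝕜 :=
  deriv (deriv (deriv r)) y + 2 * u y * deriv r y + deriv u y * r y

/-- The quadratic first integral `r'² - 2 r r'' - 2 u r²` of the equation
`r''' + 2 u r' + u' r = 0`, normalized so that the potential of the KdV hierarchy is
recovered from `r` at the value `1`. -/
noncomputable def firstIntegral (u r : 𝕜 → 𝕜) (y : 𝕜) : 𝕜 :=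
  deriv r y ^ 2 - 2 * r y * deriv (deriv r) y - 2 * u y * r y ^ 2

theorem hasDerivAt_firstIntegral (hr : ∀ k < 3, DifferentiableAt 𝕜 (deriv^[k] r) y)
    (hu : DifferentiableAt 𝕜 u y) :
    HasDerivAt (firstIntegral u r) (-2 * r y * squaredEigenfunctionOp u r y) y := by
  have hr₀ : HasDerivAt r (deriv r y) y := (hr 0 (by simp)).hasDerivAt
  have hr₁ : HasDerivAt (deriv r) (deriv (deriv r) y) y := (hr 1 (by simp)).hasDerivAt
  have hr₂ : HasDerivAt (deriv (deriv r)) (deriv (deriv (deriv r)) y) y :=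
    (hr 2 (by simp)).hasDerivAt
  refine (((hr₁.fun_pow 2).fun_sub ((hr₀.const_mul 2).fun_mul hr₂)).fun_sub
    ((hu.hasDerivAt.const_mul 2).fun_mul (hr₀.fun_pow 2))).congr_deriv ?_
  simp only [squaredEigenfunctionOp]
  push_cast
  ring

theorem deriv_deriv_add_eq_neg_two_mul_squaredEigenfunctionOp
    (hw : ∀ x, w x = -2 * deriv r x) :
    deriv (deriv w) y + 2 * u y * w y - 2 * r y * deriv u y =
      -2 * squaredEigenfunctionOp u r y := by
  have hw₂ : deriv (deriv w) y = -2 * deriv (deriv (deriv r)) y := by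
    simp only [funext hw, deriv_const_mul_field']
  rw [hw₂, hw, squaredEigenfunctionOp]
  ring

variable [NeZero (2 : 𝕜)]

theorem firstIntegral_eq_iff (hy : r y ≠ 0) :
    firstIntegral u r y = c ↔
      u y = (deriv r y ^ 2 - 2 * r y * deriv (deriv r) y - c) / (2 * r y ^ 2) := by
  rw [eq_div_iff (mul_ne_zero two_ne_zero (pow_ne_zero 2 hy)), firstIntegral]
  constructor <;> intro h <;> linear_combination -h

theorem differentiableAt_of_firstIntegral_eventuallyEq_const
    (hr : ∀ k < 3, DifferentiableAt 𝕜 (deriv^[k] r) y) (hy : r y ≠ 0)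
    (h : firstIntegral u r =ᶠ[𝓝 y] fun _ => c) : DifferentiableAt 𝕜 u y := by
  have hr₀ : DifferentiableAt 𝕜 r y := hr 0 (by simp)
  have hr₁ : DifferentiableAt 𝕜 (deriv r) y := hr 1 (by simp)
  have hr₂ : DifferentiableAt 𝕜 (deriv (deriv r)) y := hr 2 (by simp)
  have hu : u =ᶠ[𝓝 y] fun x =>
      (deriv r x ^ 2 - 2 * r x * deriv (deriv r) x - c) / (2 * r x ^ 2) := by
    filter_upwards [h, hr₀.continuousAt.eventually_ne hy] with x hx hrx
    exact (firstIntegral_eq_iff hrx).1 hx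
  refine DifferentiableAt.congr_of_eventuallyEq ?_ hu
  exact (((hr₁.fun_pow 2).fun_sub ((hr₀.const_mul 2).fun_mul hr₂)).sub_const c).fun_div
    ((hr₀.fun_pow 2).const_mul 2) (mul_ne_zero two_ne_zero (pow_ne_zero 2 hy))

theorem squaredEigenfunctionOp_eq_zero_of_firstIntegral_eventuallyEq_const
    (hr : ∀ k < 3, DifferentiableAt 𝕜 (deriv^[k] r) y) (hy : r y ≠ 0)
    (h : firstIntegral u r =ᶠ[𝓝 y] fun _ => c) : squaredEigenfunctionOp u r y = 0 := by
  have hu : DifferentiableAt 𝕜 u y :=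
    differentiableAt_of_firstIntegral_eventuallyEq_const hr hy h
  have hzero : -2 * r y * squaredEigenfunctionOp u r y = 0 :=
    (hasDerivAt_firstIntegral hr hu).unique ((hasDerivAt_const y c).congr_of_eventuallyEq h)
  exact (mul_eq_zero.1 hzero).resolve_left (mul_ne_zero (neg_ne_zero.2 two_ne_zero) hy)

end NegativeKdV

open NegativeKdV in
theorem stmt_10_general {𝕜 : Type*} [NontriviallyNormedField 𝕜] [NeZero (2 : 𝕜)]
    (ρ : 𝕜 → 𝕜 → 𝕜) (hρ : ∀ τ, ∀ k < 3, Differentiable 𝕜 (deriv^[k] fun y => ρ y τ))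
    (hne : ∀ y τ, ρ y τ ≠ 0) (κ : 𝕜 → 𝕜) (U : 𝕜 → 𝕜 → 𝕜)
    (hU : ∀ y τ, U y τ =
      ((deriv (fun a => ρ a τ) y) ^ 2
          - 2 * ρ y τ * deriv (fun b => deriv (fun a => ρ a τ) b) y - κ τ)
        / (2 * (ρ y τ) ^ 2)) :
    (∀ y τ,
      deriv (fun c => deriv (fun b => deriv (fun a => ρ a τ) b) c) y
        + 2 * U y τ * deriv (fun a => ρ a τ) y
        + deriv (fun a => U a τ) y * ρ y τ = 0)
    ∧ ((∀ y τ, deriv (fun s => U y s) τ = -2 * deriv (fun a => ρ a τ) y) →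
        ∀ y τ,
          deriv (fun b => deriv (fun a => deriv (fun s => U a s) τ) b) y
            + 2 * U y τ * deriv (fun s => U y s) τ
            - 2 * ρ y τ * deriv (fun a => U a τ) y = 0) := by
  have hfirst (y τ : 𝕜) : firstIntegral (fun a => U a τ) (fun a => ρ a τ) y = κ τ :=
    (firstIntegral_eq_iff (r := fun a => ρ a τ) (hne y τ)).2 (hU y τ)
  have hlinear (y τ : 𝕜) : squaredEigenfunctionOp (fun a => U a τ) (fun a => ρ a τ) y = 0 :=
    squaredEigenfunctionOp_eq_zero_of_firstIntegral_eventuallyEq_const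
      (fun k hk => hρ τ k hk y) (hne y τ) (.of_forall fun x => hfirst x τ)
  refine ⟨hlinear, fun hflow y τ => ?_⟩
  calc
    _ = -2 * squaredEigenfunctionOp (fun a => U a τ) (fun a => ρ a τ) y :=
      deriv_deriv_add_eq_neg_two_mul_squaredEigenfunctionOp fun x => hflow x τ
    _ = 0 := by rw [hlinear, mul_zero]

/-- for smooth positive `ρ(y,τ)` and `U = (ρ_y² − 2ρρ_{yy} − 1)/(2ρ²)`, the
identity `ρ_{yyy} + 2Uρ_y + U_yρ = 0` holds; consequently, if `U_τ = −2ρ_y` then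
`U_{τyy} + 2UU_τ − 2ρU_y = 0`, i.e. `U` solves the first negative KdV flow
`(∂_y² + 2U + U_y∂_y⁻¹)U_τ = 0` with `∂_y⁻¹U_τ = −2ρ`. -/
theorem stmt_10 (ρ : ℝ → ℝ → ℝ)
    (hρ : ContDiff ℝ (⊤ : ℕ∞) (fun p : ℝ × ℝ => ρ p.1 p.2))
    (hpos : ∀ y τ, 0 < ρ y τ)
    (U : ℝ → ℝ → ℝ)
    (hU : ∀ y τ, U y τ =
      ((deriv (fun a => ρ a τ) y) ^ 2
          - 2 * ρ y τ * deriv (fun b => deriv (fun a => ρ a τ) b) y - 1)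
        / (2 * (ρ y τ) ^ 2)) :
    (∀ y τ,
      deriv (fun c => deriv (fun b => deriv (fun a => ρ a τ) b) c) y
        + 2 * U y τ * deriv (fun a => ρ a τ) y
        + deriv (fun a => U a τ) y * ρ y τ = 0)
    ∧ ((∀ y τ, deriv (fun s => U y s) τ = -2 * deriv (fun a => ρ a τ) y) →
        ∀ y τ,
          deriv (fun b => deriv (fun a => deriv (fun s => U a s) τ) b) y
            + 2 * U y τ * deriv (fun s => U y s) τ
            - 2 * ρ y τ * deriv (fun a => U a τ) y = 0) := by
  have hslice (τ : ℝ) : ContDiff ℝ (⊤ : ℕ∞) fun y => ρ y τ :=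
    hρ.comp (contDiff_id.prodMk contDiff_const)
  exact stmt_10_general ρ (fun τ k _ => ((hslice τ).iterate_deriv k).differentiable (by simp))
    (fun y τ => (hpos y τ).ne') (fun _ => 1) U hU
end

section
/- Fix 0 < β³ < β² < β¹ and let Q(λ) = (β¹−λ)(λ−β²)(λ−β³), which is positive on (β², β¹). Set 𝒥₀(β) = 2∫_{β²}^{β¹} Q(λ)^{−1/2} dλ, 𝒥₁(β) = 2∫_{β²}^{β¹} λ Q(λ)^{−1/2} dλ, and α₁ = −𝒥₁/𝒥₀. Then 𝒥₀, as a function of (β¹, β², β³) on the domain {0 < β³ < β² < β¹}, is differentiable and for each i = 1, 2, 3: ∂𝒥₀/∂β^i = −(𝒥₀/2) (β^i + α₁) / ∏_{j≠i}(β^i − β^j). (This is the variational formula for the a-period of the holomorphic differential; equivalently, ∫ over the a-cycle of dλ/((λ−β^i)w) equals −𝒥₀(β^i+α₁)/∏_{j≠i}(β^i−β^j).) -/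
/-!
The substitution `l = b1 sin² θ + b2 cos² θ` removes the endpoint singularities: with `a = b1 - b3`,
`c = b2 - b3` and `g θ = a sin² θ + c cos² θ`, which is `l - b3`, one has `dl / √Q = 2 dθ / √g`.
Hence `𝒥₀ = 4 I(-1/2)` and `𝒥₁ = 4 I(1/2) + b3 𝒥₀`, where `I(s) = ∫ g ^ s` over `[0, π/2]`.

Differentiating under the integral sign expresses `∂I(s)` through `I(s)` and `I(s-1)`, because
`(a - c) sin² = g - c` and `(a - c) cos² = a - g`. Integrating the derivative of
`sin θ cos θ g ^ s` gives a three-term recurrence for `I` whose middle coefficient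
`(2 s + 1) (a + c)` vanishes at `s = -1/2`; there it reads `a c I(-3/2) = I(1/2)`, so the
gradient of `𝒥₀` involves only `𝒥₀` and `𝒥₁`.
-/

open Real Set Filter Topology MeasureTheory

section ParametricIntegral

variable {𝕜 H E : Type*} [RCLike 𝕜] [NormedAddCommGroup H] [NormedSpace 𝕜 H]
  [NormedAddCommGroup E] [NormedSpace ℝ E] [NormedSpace 𝕜 E]

lemma hasFDerivAt_intervalIntegral_of_continuousAt_fderiv {F : H → ℝ → E}
    {F' : H → ℝ → H →L[𝕜] E} {x₀ : H} {a b : ℝ}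
    (hF : ∀ᶠ x in 𝓝 x₀, ContinuousOn (F x) (uIcc a b))
    (hF' : ∀ t ∈ uIcc a b, ContinuousAt (Function.uncurry F') (x₀, t))
    (hderiv : ∀ᶠ x in 𝓝 x₀, ∀ t ∈ uIcc a b, HasFDerivAt (F · t) (F' x t) x) :
    HasFDerivAt (fun x => ∫ t in a..b, F x t) (∫ t in a..b, F' x₀ t) x₀ := by
  have hF'₀ : ContinuousOn (F' x₀) (uIcc a b) := fun t ht =>
    ((hF' t ht).comp (f := fun t => (x₀, t)) (by fun_prop)).continuousWithinAt
  obtain ⟨C, hC⟩ := isCompact_uIcc.exists_bound_of_continuousOn hF'₀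
  have hbound : ∀ᶠ x in 𝓝 x₀, ∀ t ∈ uIcc a b, ‖F' x t‖ < C + 1 :=
    isCompact_uIcc.eventually_forall_of_forall_eventually fun t ht =>
      (hF' t ht).norm.eventually_lt_const ((hC t ht).trans_lt (lt_add_one C))
  exact intervalIntegral.hasFDerivAt_integral_of_dominated_of_fderiv_le
    (bound := fun _ => C + 1) (hbound.and hderiv)
    (hF.mono fun x hx => (hx.mono uIoc_subset_uIcc).aestronglyMeasurable measurableSet_uIoc)
    hF.self_of_nhds.intervalIntegrable
    ((hF'₀.mono uIoc_subset_uIcc).aestronglyMeasurable measurableSet_uIoc)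
    (.of_forall fun t ht x hx => (hx.1 t (uIoc_subset_uIcc ht)).le)
    intervalIntegrable_const
    (.of_forall fun t ht x hx => hx.2 t (uIoc_subset_uIcc ht))

end ParametricIntegral

/-- The function `a sin² θ + c cos² θ`, running from `c` to `a` as `θ` runs from `0` to `π / 2`. It
serves as the variable of integration `λ`, and as `λ - β³` when `a = β¹ - β³`, `c = β² - β³`. -/
noncomputable def trigInterp (a c θ : ℝ) : ℝ := a * sin θ ^ 2 + c * cos θ ^ 2

section TrigInterp

variable (a c θ : ℝ)

lemma sub_mul_sin_sq_eq_trigInterp_sub : (a - c) * sin θ ^ 2 = trigInterp a c θ - c := by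
  unfold trigInterp
  linear_combination -c * sin_sq_add_cos_sq θ

lemma sub_mul_cos_sq_eq_sub_trigInterp : (a - c) * cos θ ^ 2 = a - trigInterp a c θ := by
  unfold trigInterp
  linear_combination a * sin_sq_add_cos_sq θ

lemma trigInterp_sub_sub (b : ℝ) : trigInterp (a - b) (c - b) θ = trigInterp a c θ - b := by
  unfold trigInterp
  linear_combination -b * sin_sq_add_cos_sq θ

@[fun_prop]
lemma continuous_trigInterp : Continuous (trigInterp a c) := by
  unfold trigInterp
  fun_prop

lemma hasDerivAt_trigInterp :
    HasDerivAt (trigInterp a c) (2 * (a - c) * (sin θ * cos θ)) θ := by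
  refine ((((hasDerivAt_sin θ).pow 2).const_mul a).add
    (((hasDerivAt_cos θ).pow 2).const_mul c)).congr_deriv ?_
  simp only [Nat.cast_ofNat, Nat.add_one_sub_one, pow_one]
  ring

lemma hasFDerivAt_trigInterp (p : ℝ × ℝ) :
    HasFDerivAt (fun p : ℝ × ℝ => trigInterp p.1 p.2 θ)
      (sin θ ^ 2 • ContinuousLinearMap.fst ℝ ℝ ℝ + cos θ ^ 2 • ContinuousLinearMap.snd ℝ ℝ ℝ) p :=
  (hasFDerivAt_fst.mul_const _).add (hasFDerivAt_snd.mul_const _)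

variable {a c}

lemma trigInterp_pos (ha : 0 < a) (hc : 0 < c) : 0 < trigInterp a c θ := by
  have hmin : 0 < min a c := lt_min ha hc
  calc 0 < min a c * (sin θ ^ 2 + cos θ ^ 2) := by rwa [sin_sq_add_cos_sq, mul_one]
    _ = min a c * sin θ ^ 2 + min a c * cos θ ^ 2 := mul_add _ _ _
    _ ≤ trigInterp a c θ := by
      unfold trigInterp
      gcongr
      exacts [min_le_left a c, min_le_right a c]

lemma continuous_trigInterp_rpow (ha : 0 < a) (hc : 0 < c) (s : ℝ) :
    Continuous fun θ => trigInterp a c θ ^ s :=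
  (continuous_trigInterp a c).rpow_const fun θ => .inl (trigInterp_pos θ ha hc).ne'

lemma sqrt_sub_trigInterp_mul_trigInterp_sub (hca : c ≤ a) (hs : 0 ≤ sin θ) (hc : 0 ≤ cos θ) :
    √((a - trigInterp a c θ) * (trigInterp a c θ - c)) = (a - c) * (sin θ * cos θ) := by
  rw [← sub_mul_sin_sq_eq_trigInterp_sub, ← sub_mul_cos_sq_eq_sub_trigInterp,
    sqrt_eq_iff_mul_self_eq (by positivity) (mul_nonneg (sub_nonneg.2 hca) (mul_nonneg hs hc))]
  ring

end TrigInterp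

/-- Both sides may be the junk value of a divergent integral: `trigInterp` is monotone on
`[0, π / 2]`, so the change of variables needs no integrability. -/
lemma integral_inv_sqrt_smul_eq_integral_trigInterp {E : Type*} [NormedAddCommGroup E]
    [NormedSpace ℝ E] {a c : ℝ} (hca : c < a) (f : ℝ → E) :
    ∫ x in c..a, (√((a - x) * (x - c)))⁻¹ • f x
      = (2 : ℝ) • ∫ θ in 0..π / 2, f (trigInterp a c θ) := by
  have hsin : ∀ θ ∈ Ioo 0 (π / 2), 0 < sin θ := fun θ hθ =>
    sin_pos_of_pos_of_lt_pi hθ.1 (by linarith [hθ.2, pi_pos])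
  have hcos : ∀ θ ∈ Ioo 0 (π / 2), 0 < cos θ := fun θ hθ =>
    cos_pos_of_mem_Ioo ⟨by linarith [hθ.1, pi_pos], hθ.2⟩
  have hac : 0 < a - c := sub_pos.2 hca
  have change_of_variables := integral_Icc_deriv_smul_of_deriv_nonneg
    (g := fun x => (√((a - x) * (x - c)))⁻¹ • f x)
    (continuous_trigInterp a c).continuousOn (fun θ _ => hasDerivAt_trigInterp a c θ)
    (fun θ hθ => by have := hsin θ hθ; have := hcos θ hθ; positivity) pi_div_two_pos.le
  have h0 : trigInterp a c 0 = c := by simp [trigInterp]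
  have h1 : trigInterp a c (π / 2) = a := by simp [trigInterp]
  rw [h0, h1] at change_of_variables
  rw [← intervalIntegral.integral_smul, intervalIntegral.integral_of_le hca.le,
    intervalIntegral.integral_of_le pi_div_two_pos.le, ← integral_Icc_eq_integral_Ioc,
    ← change_of_variables, integral_Icc_eq_integral_Ioo, integral_Ioc_eq_integral_Ioo]
  refine setIntegral_congr_fun measurableSet_Ioo fun θ hθ => ?_
  have hs := hsin θ hθ
  have hc := hcos θ hθ
  simp only [sqrt_sub_trigInterp_mul_trigInterp_sub θ hca.le hs.le hc.le, smul_smul]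
  congr 1
  field_simp

/-- The integral `∫ (a sin² θ + c cos² θ) ^ s` over `[0, π / 2]`. For `s = -1/2` and `s = 1/2` these
are the complete elliptic integrals of the first and second kind, in symmetric form. -/
noncomputable def trigPowerIntegral (s a c : ℝ) : ℝ := ∫ θ in 0..π / 2, trigInterp a c θ ^ s

section TrigPowerIntegral

variable {a c : ℝ}

lemma trigPowerIntegral_pos (ha : 0 < a) (hc : 0 < c) (s : ℝ) : 0 < trigPowerIntegral s a c :=
  intervalIntegral.intervalIntegral_pos_of_pos
    ((continuous_trigInterp_rpow ha hc s).intervalIntegrable _ _)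
    (fun θ => rpow_pos_of_pos (trigInterp_pos θ ha hc) s) pi_div_two_pos

lemma integral_affine_trigInterp_mul_rpow (ha : 0 < a) (hc : 0 < c) (s u v : ℝ) :
    ∫ θ in 0..π / 2, (u * trigInterp a c θ + v) * trigInterp a c θ ^ (s - 1)
      = u * trigPowerIntegral s a c + v * trigPowerIntegral (s - 1) a c := by
  have hint : ∀ s : ℝ, IntervalIntegrable (fun θ => trigInterp a c θ ^ s) volume 0 (π / 2) :=
    fun s => (continuous_trigInterp_rpow ha hc s).intervalIntegrable _ _
  rw [trigPowerIntegral, trigPowerIntegral, ← intervalIntegral.integral_const_mul,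
    ← intervalIntegral.integral_const_mul,
    ← intervalIntegral.integral_add ((hint _).const_mul _) ((hint _).const_mul _)]
  refine intervalIntegral.integral_congr fun θ _ => ?_
  simp only [rpow_sub_one (trigInterp_pos θ ha hc).ne']
  field_simp [(trigInterp_pos θ ha hc).ne']

lemma hasDerivAt_sin_mul_cos_mul_trigInterp_rpow (ha : 0 < a) (hc : 0 < c) (s θ : ℝ) :
    HasDerivAt (fun θ => (a - c) * (sin θ * cos θ * trigInterp a c θ ^ s))
      ((2 * s + 1) * (a + c) * trigInterp a c θ ^ s
        - (2 * s + 2) * trigInterp a c θ ^ (s + 1)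
        - 2 * s * (a * c) * trigInterp a c θ ^ (s - 1)) θ := by
  have hg := (trigInterp_pos θ ha hc).ne'
  refine ((((hasDerivAt_sin θ).mul (hasDerivAt_cos θ)).mul
    ((hasDerivAt_trigInterp a c θ).rpow_const (.inl hg))).const_mul (a - c)).congr_deriv ?_
  have hsin := sub_mul_sin_sq_eq_trigInterp_sub a c θ
  have hcos := sub_mul_cos_sq_eq_sub_trigInterp a c θ
  have hpow : trigInterp a c θ ^ s = trigInterp a c θ ^ (s - 1) * trigInterp a c θ := by
    rw [← rpow_add_one hg, sub_add_cancel]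
  rw [rpow_add_one hg, hpow]
  simp only [Pi.mul_apply]
  generalize trigInterp a c θ ^ (s - 1) = w at *
  generalize trigInterp a c θ = g at *
  linear_combination (w * g) * (hcos - hsin)
    + 2 * s * w * (hsin * ((a - c) * cos θ ^ 2) + (g - c) * hcos)

lemma trigPowerIntegral_recurrence (ha : 0 < a) (hc : 0 < c) (s : ℝ) :
    (2 * s + 2) * trigPowerIntegral (s + 1) a c
      = (2 * s + 1) * (a + c) * trigPowerIntegral s a c
        - 2 * s * (a * c) * trigPowerIntegral (s - 1) a c := by
  have hint : ∀ k r : ℝ,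
      IntervalIntegrable (fun θ => k * trigInterp a c θ ^ r) volume 0 (π / 2) := fun k r =>
    ((continuous_trigInterp_rpow ha hc r).intervalIntegrable _ _).const_mul k
  have h := intervalIntegral.integral_eq_sub_of_hasDerivAt (a := 0) (b := π / 2)
    (fun θ _ => hasDerivAt_sin_mul_cos_mul_trigInterp_rpow ha hc s θ)
    (((hint _ _).sub (hint _ _)).sub (hint _ _))
  rw [intervalIntegral.integral_sub ((hint _ _).sub (hint _ _)) (hint _ _),
    intervalIntegral.integral_sub (hint _ _) (hint _ _)] at h
  simp only [intervalIntegral.integral_const_mul, sin_zero, cos_pi_div_two, zero_mul, mul_zero,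
    sub_zero] at h
  unfold trigPowerIntegral
  linarith

lemma hasFDerivAt_trigPowerIntegral (ha : 0 < a) (hc : 0 < c) (s : ℝ) :
    HasFDerivAt (fun p : ℝ × ℝ => trigPowerIntegral s p.1 p.2)
      (∫ θ in 0..π / 2, (s * trigInterp a c θ ^ (s - 1)) •
        (sin θ ^ 2 • ContinuousLinearMap.fst ℝ ℝ ℝ + cos θ ^ 2 • ContinuousLinearMap.snd ℝ ℝ ℝ))
      (a, c) := by
  have hpos : ∀ᶠ p : ℝ × ℝ in 𝓝 (a, c), 0 < p.1 ∧ 0 < p.2 :=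
    (continuous_fst.tendsto (a, c) |>.eventually_const_lt ha).and
      (continuous_snd.tendsto (a, c) |>.eventually_const_lt hc)
  refine hasFDerivAt_intervalIntegral_of_continuousAt_fderiv
    (F := fun p θ => trigInterp p.1 p.2 θ ^ s)
    (F' := fun p θ => (s * trigInterp p.1 p.2 θ ^ (s - 1)) •
      (sin θ ^ 2 • ContinuousLinearMap.fst ℝ ℝ ℝ + cos θ ^ 2 • ContinuousLinearMap.snd ℝ ℝ ℝ))
    (hpos.mono fun p hp => (continuous_trigInterp_rpow hp.1 hp.2 s).continuousOn)
    (fun θ _ => ?_) (hpos.mono fun p hp θ _ => ?_)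
  · have hg : Continuous fun q : (ℝ × ℝ) × ℝ => trigInterp q.1.1 q.1.2 q.2 := by
      unfold trigInterp
      fun_prop
    have hpow : ContinuousAt (fun q : (ℝ × ℝ) × ℝ => trigInterp q.1.1 q.1.2 q.2 ^ (s - 1))
        ((a, c), θ) := hg.continuousAt.rpow_const (.inl (trigInterp_pos θ ha hc).ne')
    exact (hpow.const_mul s).smul (by fun_prop)
  · exact (hasFDerivAt_trigInterp θ p).rpow_const (.inl (trigInterp_pos θ hp.1 hp.2).ne')

lemma hasFDerivAt_trigPowerIntegral_of_ne (ha : 0 < a) (hc : 0 < c) (hac : a ≠ c) (s : ℝ) :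
    HasFDerivAt (fun p : ℝ × ℝ => trigPowerIntegral s p.1 p.2)
      ((s * (trigPowerIntegral s a c - c * trigPowerIntegral (s - 1) a c) / (a - c)) •
          ContinuousLinearMap.fst ℝ ℝ ℝ
        + (s * (a * trigPowerIntegral (s - 1) a c - trigPowerIntegral s a c) / (a - c)) •
          ContinuousLinearMap.snd ℝ ℝ ℝ) (a, c) := by
  refine (hasFDerivAt_trigPowerIntegral ha hc s).congr_fderiv ?_
  have hac' : a - c ≠ 0 := sub_ne_zero.2 hac
  have hint : ∀ (u v : ℝ) (L : ℝ × ℝ →L[ℝ] ℝ), IntervalIntegrable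
      (fun θ => ((u * trigInterp a c θ + v) * trigInterp a c θ ^ (s - 1)) • L)
      volume 0 (π / 2) := fun u v L => by
    have := continuous_trigInterp_rpow ha hc (s - 1)
    exact Continuous.intervalIntegrable (by fun_prop) _ _
  have hsin : ∀ θ, sin θ ^ 2 = (trigInterp a c θ - c) / (a - c) := fun θ => by
    rw [← sub_mul_sin_sq_eq_trigInterp_sub, mul_div_cancel_left₀ _ hac']
  have hcos : ∀ θ, cos θ ^ 2 = (a - trigInterp a c θ) / (a - c) := fun θ => by
    rw [← sub_mul_cos_sq_eq_sub_trigInterp, mul_div_cancel_left₀ _ hac']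
  calc
    _ = ∫ θ in 0..π / 2,
          (((s / (a - c)) * trigInterp a c θ + -(s * c / (a - c)))
            * trigInterp a c θ ^ (s - 1)) • ContinuousLinearMap.fst ℝ ℝ ℝ
          + ((-(s / (a - c)) * trigInterp a c θ + s * a / (a - c))
            * trigInterp a c θ ^ (s - 1)) • ContinuousLinearMap.snd ℝ ℝ ℝ := by
      refine intervalIntegral.integral_congr fun θ _ => ?_
      simp only [hsin, hcos, smul_add, smul_smul]
      congr 2 <;> ring
    _ = _ := by
      rw [intervalIntegral.integral_add (hint _ _ _) (hint _ _ _),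
        intervalIntegral.integral_smul_const, intervalIntegral.integral_smul_const,
        integral_affine_trigInterp_mul_rpow ha hc, integral_affine_trigInterp_mul_rpow ha hc]
      congr 2 <;> ring

lemma hasFDerivAt_trigPowerIntegral_neg_half (ha : 0 < a) (hc : 0 < c) (hac : a ≠ c) :
    HasFDerivAt (fun p : ℝ × ℝ => trigPowerIntegral (-1 / 2) p.1 p.2)
      ((-(a * trigPowerIntegral (-1 / 2) a c - trigPowerIntegral (1 / 2) a c)
            / (2 * a * (a - c))) • ContinuousLinearMap.fst ℝ ℝ ℝ
        + (-(c * trigPowerIntegral (-1 / 2) a c - trigPowerIntegral (1 / 2) a c)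
            / (2 * c * (c - a))) • ContinuousLinearMap.snd ℝ ℝ ℝ) (a, c) := by
  have hrec : trigPowerIntegral (1 / 2) a c = a * c * trigPowerIntegral (-1 / 2 - 1) a c := by
    have h := trigPowerIntegral_recurrence ha hc (-1 / 2)
    rw [show (-1 / 2 : ℝ) + 1 = 1 / 2 by norm_num] at h
    linear_combination h
  refine (hasFDerivAt_trigPowerIntegral_of_ne ha hc hac (-1 / 2)).congr_fderiv ?_
  have hac' : a - c ≠ 0 := sub_ne_zero.2 hac
  have hca' : c - a ≠ 0 := sub_ne_zero.2 hac.symm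
  rw [hrec]
  congr 2
  · field_simp
  · field_simp
    ring

end TrigPowerIntegral

/-- The integral `𝒥_k = 2 ∫ λ^k Q(λ)^(-1/2) dλ` over `[β², β¹]`, with `bi` for `βⁱ`. As `w² = -Q`,
it is the a-period of `λ^k dλ / w` up to a factor `± i`. -/
noncomputable def aPeriod (k : ℕ) (b1 b2 b3 : ℝ) : ℝ :=
  2 * ∫ l in b2..b1, l ^ k / √((b1 - l) * (l - b2) * (l - b3))

section APeriod

variable {b1 b2 b3 : ℝ}

lemma aPeriod_eq_integral_trigInterp (h32 : b3 < b2) (h21 : b2 < b1) (k : ℕ) :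
    aPeriod k b1 b2 b3 = 4 * ∫ θ in 0..π / 2,
      trigInterp b1 b2 θ ^ k * trigInterp (b1 - b3) (b2 - b3) θ ^ (-1 / 2 : ℝ) := by
  have hsplit : ∀ l ∈ uIcc b2 b1, l ^ k / √((b1 - l) * (l - b2) * (l - b3))
      = (√((b1 - l) * (l - b2)))⁻¹ • (l ^ k * (l - b3) ^ (-1 / 2 : ℝ)) := fun l hl => by
    rw [uIcc_of_le h21.le] at hl
    have hlb3 : 0 ≤ l - b3 := by linarith [hl.1]
    rw [sqrt_mul (mul_nonneg (sub_nonneg.2 hl.2) (sub_nonneg.2 hl.1)), neg_div,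
      rpow_neg hlb3, ← sqrt_eq_rpow, smul_eq_mul, div_eq_mul_inv, mul_inv]
    ring
  rw [aPeriod, intervalIntegral.integral_congr hsplit,
    integral_inv_sqrt_smul_eq_integral_trigInterp h21, smul_eq_mul]
  simp only [trigInterp_sub_sub]
  ring

lemma aPeriod_zero_eq_trigPowerIntegral (h32 : b3 < b2) (h21 : b2 < b1) :
    aPeriod 0 b1 b2 b3 = 4 * trigPowerIntegral (-1 / 2) (b1 - b3) (b2 - b3) := by
  simp only [aPeriod_eq_integral_trigInterp h32 h21, trigPowerIntegral, pow_zero, one_mul]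

lemma aPeriod_one_eq_trigPowerIntegral (h32 : b3 < b2) (h21 : b2 < b1) :
    aPeriod 1 b1 b2 b3 = 4 * (trigPowerIntegral (1 / 2) (b1 - b3) (b2 - b3)
      + b3 * trigPowerIntegral (-1 / 2) (b1 - b3) (b2 - b3)) := by
  have hl : ∀ θ, trigInterp b1 b2 θ = 1 * trigInterp (b1 - b3) (b2 - b3) θ + b3 := fun θ => by
    rw [trigInterp_sub_sub, one_mul, sub_add_cancel]
  have h := integral_affine_trigInterp_mul_rpow (sub_pos.2 (h32.trans h21)) (sub_pos.2 h32)
    (1 / 2) 1 b3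
  rw [show (1 / 2 : ℝ) - 1 = -1 / 2 by norm_num, one_mul] at h
  simp only [aPeriod_eq_integral_trigInterp h32 h21, pow_one, hl, h]

lemma aPeriod_zero_pos (h32 : b3 < b2) (h21 : b2 < b1) : 0 < aPeriod 0 b1 b2 b3 := by
  rw [aPeriod_zero_eq_trigPowerIntegral h32 h21]
  exact mul_pos four_pos
    (trigPowerIntegral_pos (sub_pos.2 (h32.trans h21)) (sub_pos.2 h32) _)

lemma hasFDerivAt_aPeriod_zero (h32 : b3 < b2) (h21 : b2 < b1) :
    HasFDerivAt (fun p : ℝ × ℝ × ℝ => aPeriod 0 p.1 p.2.1 p.2.2)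
      (((aPeriod 1 b1 b2 b3 - b1 * aPeriod 0 b1 b2 b3) / (2 * ((b1 - b2) * (b1 - b3)))) •
          ContinuousLinearMap.fst ℝ ℝ (ℝ × ℝ)
        + ((aPeriod 1 b1 b2 b3 - b2 * aPeriod 0 b1 b2 b3) / (2 * ((b2 - b1) * (b2 - b3)))) •
          (ContinuousLinearMap.fst ℝ ℝ ℝ ∘L ContinuousLinearMap.snd ℝ ℝ (ℝ × ℝ))
        + ((aPeriod 1 b1 b2 b3 - b3 * aPeriod 0 b1 b2 b3) / (2 * ((b3 - b1) * (b3 - b2)))) •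
          (ContinuousLinearMap.snd ℝ ℝ ℝ ∘L ContinuousLinearMap.snd ℝ ℝ (ℝ × ℝ)))
      (b1, b2, b3) := by
  have heq : (fun p : ℝ × ℝ × ℝ => aPeriod 0 p.1 p.2.1 p.2.2) =ᶠ[𝓝 (b1, b2, b3)]
      fun p => 4 * trigPowerIntegral (-1 / 2) (p.1 - p.2.2) (p.2.1 - p.2.2) := by
    have hev32 : ∀ᶠ p : ℝ × ℝ × ℝ in 𝓝 (b1, b2, b3), p.2.2 < p.2.1 :=
      ContinuousAt.eventually_lt (by fun_prop) (by fun_prop) h32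
    have hev21 : ∀ᶠ p : ℝ × ℝ × ℝ in 𝓝 (b1, b2, b3), p.2.1 < p.1 :=
      ContinuousAt.eventually_lt (by fun_prop) (by fun_prop) h21
    filter_upwards [hev32, hev21] with p hp32 hp21 using aPeriod_zero_eq_trigPowerIntegral hp32 hp21
  let shift : ℝ × ℝ × ℝ →L[ℝ] ℝ × ℝ :=
    (ContinuousLinearMap.fst ℝ ℝ (ℝ × ℝ)
      - ContinuousLinearMap.snd ℝ ℝ ℝ ∘L ContinuousLinearMap.snd ℝ ℝ (ℝ × ℝ)).prod
    (ContinuousLinearMap.fst ℝ ℝ ℝ ∘L ContinuousLinearMap.snd ℝ ℝ (ℝ × ℝ)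
      - ContinuousLinearMap.snd ℝ ℝ ℝ ∘L ContinuousLinearMap.snd ℝ ℝ (ℝ × ℝ))
  have hI := hasFDerivAt_trigPowerIntegral_neg_half (sub_pos.2 (h32.trans h21)) (sub_pos.2 h32)
    (sub_left_injective.ne h21.ne')
  refine ((hI.comp (f := shift) (b1, b2, b3) shift.hasFDerivAt).const_mul 4
    |>.congr_of_eventuallyEq heq).congr_fderiv ?_
  have h12 : b1 - b2 ≠ 0 := sub_ne_zero.2 h21.ne'
  have h21' : b2 - b1 ≠ 0 := sub_ne_zero.2 h21.ne
  have h13 : b1 - b3 ≠ 0 := sub_ne_zero.2 (h32.trans h21).ne'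
  have h31 : b3 - b1 ≠ 0 := sub_ne_zero.2 (h32.trans h21).ne
  have h23 : b2 - b3 ≠ 0 := sub_ne_zero.2 h32.ne'
  have h32' : b3 - b2 ≠ 0 := sub_ne_zero.2 h32.ne
  rw [aPeriod_zero_eq_trigPowerIntegral h32 h21, aPeriod_one_eq_trigPowerIntegral h32 h21]
  ext <;> simp [shift] <;> field_simp <;> ring

end APeriod

theorem stmt_12_general
    (J0 J1 : ℝ → ℝ → ℝ → ℝ)
    (hJ0 : ∀ b1 b2 b3, J0 b1 b2 b3 =
      2 * ∫ l in b2..b1, 1 / Real.sqrt ((b1 - l) * (l - b2) * (l - b3)))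
    (hJ1 : ∀ b1 b2 b3, J1 b1 b2 b3 =
      2 * ∫ l in b2..b1, l / Real.sqrt ((b1 - l) * (l - b2) * (l - b3))) :
    ∀ b1 b2 b3 : ℝ, b3 < b2 → b2 < b1 →
      DifferentiableAt ℝ (fun p : ℝ × ℝ × ℝ => J0 p.1 p.2.1 p.2.2) (b1, b2, b3)
      ∧ HasDerivAt (fun x => J0 x b2 b3)
          (-(J0 b1 b2 b3 / 2) * (b1 + (-(J1 b1 b2 b3) / J0 b1 b2 b3))
            / ((b1 - b2) * (b1 - b3))) b1
      ∧ HasDerivAt (fun x => J0 b1 x b3)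
          (-(J0 b1 b2 b3 / 2) * (b2 + (-(J1 b1 b2 b3) / J0 b1 b2 b3))
            / ((b2 - b1) * (b2 - b3))) b2
      ∧ HasDerivAt (fun x => J0 b1 b2 x)
          (-(J0 b1 b2 b3 / 2) * (b3 + (-(J1 b1 b2 b3) / J0 b1 b2 b3))
            / ((b3 - b1) * (b3 - b2))) b3 := by
  obtain rfl : J0 = aPeriod 0 := by
    ext b1 b2 b3
    simp only [hJ0, aPeriod, pow_zero]
  obtain rfl : J1 = aPeriod 1 := by
    ext b1 b2 b3
    simp only [hJ1, aPeriod, pow_one]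
  intro b1 b2 b3 h32 h21
  have hJ := hasFDerivAt_aPeriod_zero h32 h21
  have hne := (aPeriod_zero_pos h32 h21).ne'
  have hcoeff : ∀ b d : ℝ, (aPeriod 1 b1 b2 b3 - b * aPeriod 0 b1 b2 b3) / (2 * d)
      = -(aPeriod 0 b1 b2 b3 / 2) * (b + -aPeriod 1 b1 b2 b3 / aPeriod 0 b1 b2 b3) / d :=
    fun b d => by field_simp; ring
  simp only [hcoeff] at hJ
  refine ⟨hJ.differentiableAt, ?_, ?_, ?_⟩
  · simpa [Function.comp_def] using hJ.comp_hasDerivAt b1 (f := fun x => (x, b2, b3))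
      ((hasDerivAt_id b1).prodMk (hasDerivAt_const b1 (b2, b3)))
  · simpa [Function.comp_def] using hJ.comp_hasDerivAt b2 (f := fun x => (b1, x, b3))
      ((hasDerivAt_const b2 b1).prodMk ((hasDerivAt_id b2).prodMk (hasDerivAt_const b2 b3)))
  · simpa [Function.comp_def] using hJ.comp_hasDerivAt b3 (f := fun x => (b1, b2, x))
      ((hasDerivAt_const b3 b1).prodMk ((hasDerivAt_const b3 b2).prodMk (hasDerivAt_id b3)))

/-- variational formula for the a-period `𝒥₀` of the holomorphic
differential: on `{0 < β³ < β² < β¹}`, `𝒥₀` is differentiable in each branch point and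
`∂𝒥₀/∂β^i = −(𝒥₀/2)(β^i + α₁)/∏_{j≠i}(β^i − β^j)`, where `α₁ = −𝒥₁/𝒥₀`. -/
theorem stmt_12
    (J0 J1 : ℝ → ℝ → ℝ → ℝ)
    (hJ0 : ∀ b1 b2 b3, J0 b1 b2 b3 =
      2 * ∫ l in b2..b1, 1 / Real.sqrt ((b1 - l) * (l - b2) * (l - b3)))
    (hJ1 : ∀ b1 b2 b3, J1 b1 b2 b3 =
      2 * ∫ l in b2..b1, l / Real.sqrt ((b1 - l) * (l - b2) * (l - b3))) :
    ∀ b1 b2 b3 : ℝ, 0 < b3 → b3 < b2 → b2 < b1 →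
      DifferentiableAt ℝ (fun p : ℝ × ℝ × ℝ => J0 p.1 p.2.1 p.2.2) (b1, b2, b3)
      ∧ HasDerivAt (fun x => J0 x b2 b3)
          (-(J0 b1 b2 b3 / 2) * (b1 + (-(J1 b1 b2 b3) / J0 b1 b2 b3))
            / ((b1 - b2) * (b1 - b3))) b1
      ∧ HasDerivAt (fun x => J0 b1 x b3)
          (-(J0 b1 b2 b3 / 2) * (b2 + (-(J1 b1 b2 b3) / J0 b1 b2 b3))
            / ((b2 - b1) * (b2 - b3))) b2
      ∧ HasDerivAt (fun x => J0 b1 b2 x)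
          (-(J0 b1 b2 b3 / 2) * (b3 + (-(J1 b1 b2 b3) / J0 b1 b2 b3))
            / ((b3 - b1) * (b3 - b2))) b3 :=
  fun b1 b2 b3 _ => stmt_12_general J0 J1 hJ0 hJ1 b1 b2 b3
end

section
/- Fix 0 < β³ < β² < β¹, let Q(λ) = (β¹−λ)(λ−β²)(λ−β³), 𝒥₀ = 2∫_{β²}^{β¹} Q^{−1/2} dλ, 𝒥₁ = 2∫_{β²}^{β¹} λ Q^{−1/2} dλ, α₁ = −𝒥₁/𝒥₀. Define the averaged wave number 𝒦(β) = 2π/𝒥₀(β) and frequency Ω(β) = (4π/𝒥₀(β)) (β¹β²β³)^{−1/2}. Then for each i = 1, 2, 3 the partial derivatives ∂𝒦/∂β^i and ∂Ω/∂β^i exist, ∂𝒦/∂β^i ≠ 0, and the characteristic speeds of the one-phase Whitham equations of the first negative KdV flow are v^i(β) := (∂Ω/∂β^i)/(∂𝒦/∂β^i) = (2/√(β¹β²β³)) (1 − ∏_{j≠i}(β^i − β^j) / (β^i (β^i + α₁))). -/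
/-!
With `l = b₁ sin² θ + b₂ cos² θ` the endpoint singularities disappear and `𝒥ₖ` becomes
`4 ∫ lᵏ / √D` over `[0, π/2]`, where `D = A sin² θ + B cos² θ`, `A = b₁ - b₃`, `B = b₂ - b₃`.
Differentiating under the integral sign turns `∂ᵢ𝒥₀` into an integral of a quadratic form in
`(sin θ, cos θ)` against `D ^ (-3/2)`, and integrating the derivative of `sin θ cos θ / √D` brings
`𝒥₁ - bᵢ 𝒥₀` to the same shape. Comparing the two gives
`2 ∏_{j ≠ i} (bᵢ - bⱼ) ∂ᵢ𝒥₀ = 𝒥₁ - bᵢ 𝒥₀`.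

Since `Ω = 𝒦 C` with `C` homogeneous of degree `-1/2` in each `bᵢ`, the speed is
`vᵢ = C + (𝒦 / ∂ᵢ𝒦) ∂ᵢC = C (1 + 𝒥₀ / (2 bᵢ ∂ᵢ𝒥₀))`.
-/

open Set MeasureTheory Filter Topology
open scoped Real Interval

section ParametricIntegral

variable {𝕜 E : Type*} [RCLike 𝕜] [NormedAddCommGroup E] [NormedSpace ℝ E] [NormedSpace 𝕜 E]

lemma hasDerivAt_intervalIntegral_of_continuousOn_deriv {F F' : 𝕜 → ℝ → E} {a b : ℝ} {x₀ : 𝕜}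
    {s : Set 𝕜} (hs : s ∈ 𝓝 x₀) (hF : ∀ x ∈ s, ContinuousOn (F x) [[a, b]])
    (hF' : ContinuousOn (Function.uncurry F') (s ×ˢ [[a, b]]))
    (hderiv : ∀ x ∈ s, ∀ t ∈ [[a, b]], HasDerivAt (F · t) (F' x t) x) :
    HasDerivAt (fun x => ∫ t in a..b, F x t) (∫ t in a..b, F' x₀ t) x₀ := by
  obtain ⟨ε, hε, hεs⟩ := Metric.nhds_basis_closedBall.mem_iff.1 hs
  obtain ⟨C, hC⟩ := ((isCompact_closedBall x₀ ε).prod isCompact_uIcc).exists_bound_of_continuousOn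
    (hF'.mono (prod_mono hεs Subset.rfl))
  have measurable_of_continuousOn {f : ℝ → E} (hf : ContinuousOn f [[a, b]]) :
      AEStronglyMeasurable f (volume.restrict (Ι a b)) :=
    hf.intervalIntegrable.aestronglyMeasurable_restrict_uIoc
  have hF'₀ : ContinuousOn (F' x₀) [[a, b]] :=
    hF'.comp (by fun_prop : Continuous fun t : ℝ => (x₀, t)).continuousOn
      fun t ht => ⟨mem_of_mem_nhds hs, ht⟩
  refine (intervalIntegral.hasDerivAt_integral_of_dominated_loc_of_deriv_le
    (bound := fun _ => C) (Metric.closedBall_mem_nhds x₀ hε)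
    (eventually_of_mem hs fun x hx => measurable_of_continuousOn (hF x hx))
    (hF x₀ (mem_of_mem_nhds hs)).intervalIntegrable (measurable_of_continuousOn hF'₀)
    (.of_forall fun t ht x hx => hC (x, t) ⟨hx, uIoc_subset_uIcc ht⟩) intervalIntegrable_const
    (.of_forall fun t ht x hx => hderiv x (hεs hx) t (uIoc_subset_uIcc ht))).2

end ParametricIntegral

section TrigForm

/-- The quadratic form `diag (A, B)` evaluated at `(sin θ, cos θ)`. It is at once the substitution
`l = trigForm b₁ b₂ θ` on the branch cut `[b₂, b₁]` and the integrand of a complete elliptic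
integral in Gauss's form `∫ dθ / √(trigForm A B θ)`. -/
noncomputable def trigForm (A B θ : ℝ) : ℝ :=
  A * Real.sin θ ^ 2 + B * Real.cos θ ^ 2

variable {A B : ℝ}

@[fun_prop]
lemma continuous_trigForm {X : Type*} [TopologicalSpace X] {f g h : X → ℝ} (hf : Continuous f)
    (hg : Continuous g) (hh : Continuous h) : Continuous fun x => trigForm (f x) (g x) (h x) := by
  unfold trigForm
  fun_prop

lemma trigForm_pos (hA : 0 < A) (hB : 0 < B) (θ : ℝ) : 0 < trigForm A B θ := by
  unfold trigForm
  rcases eq_or_ne (Real.sin θ) 0 with hsin | hsin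
  · have hcos : Real.cos θ ^ 2 = 1 := by simpa [hsin] using Real.sin_sq_add_cos_sq θ
    simpa [hsin, hcos] using hB
  · positivity

lemma trigForm_sub_const (A B c θ : ℝ) : trigForm A B θ - c = trigForm (A - c) (B - c) θ := by
  unfold trigForm
  linear_combination c * Real.sin_sq_add_cos_sq θ

lemma hasDerivAt_trigForm (A B θ : ℝ) :
    HasDerivAt (trigForm A B) (2 * (A - B) * (Real.sin θ * Real.cos θ)) θ :=
  ((((Real.hasDerivAt_sin θ).pow 2).const_mul A).add
    (((Real.hasDerivAt_cos θ).pow 2).const_mul B)).congr_deriv (by push_cast; ring)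

lemma sin_mul_cos_pos_of_mem_Ioo {θ : ℝ} (hθ : θ ∈ Ioo 0 (π / 2)) :
    0 < Real.sin θ * Real.cos θ :=
  mul_pos (Real.sin_pos_of_pos_of_lt_pi hθ.1 (by linarith [hθ.2, Real.pi_pos]))
    (Real.cos_pos_of_mem_Ioo ⟨by linarith [hθ.1, Real.pi_pos], hθ.2⟩)

lemma continuous_div_sqrt_trigForm_pow (hA : 0 < A) (hB : 0 < B) (n : ℕ) {g : ℝ → ℝ}
    (hg : Continuous g) : Continuous fun θ => g θ / √(trigForm A B θ) ^ n :=
  hg.div (by fun_prop) fun θ => pow_ne_zero n (Real.sqrt_pos.2 (trigForm_pos hA hB θ)).ne'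

lemma integral_trigForm_div_sqrt_pos {P R : ℝ} (hA : 0 < A) (hB : 0 < B) (hP : 0 ≤ P)
    (hR : 0 ≤ R) (hPR : 0 < P + R) : 0 < ∫ θ in 0..π / 2, trigForm P R θ / √(trigForm A B θ) := by
  refine intervalIntegral.intervalIntegral_pos_of_pos_on ?_ (fun θ hθ => ?_) (by positivity)
  · simpa using (continuous_div_sqrt_trigForm_pow hA hB 1
      (g := trigForm P R) (by fun_prop)).intervalIntegrable 0 (π / 2)
  · have hsc := sin_mul_cos_pos_of_mem_Ioo hθ
    have hsin : Real.sin θ ≠ 0 := left_ne_zero_of_mul hsc.ne'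
    have hcos : Real.cos θ ≠ 0 := right_ne_zero_of_mul hsc.ne'
    refine div_pos ?_ (Real.sqrt_pos.2 (trigForm_pos hA hB θ))
    unfold trigForm
    rcases hP.eq_or_lt with rfl | hP
    · have : 0 < R := by simpa using hPR
      positivity
    · positivity

lemma hasDerivAt_sin_mul_cos_div_sqrt_trigForm (hA : 0 < A) (hB : 0 < B) (θ : ℝ) :
    HasDerivAt (fun θ => Real.sin θ * Real.cos θ / √(trigForm A B θ))
      ((B * Real.cos θ ^ 4 - A * Real.sin θ ^ 4) / √(trigForm A B θ) ^ 3) θ := by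
  have hD := trigForm_pos hA hB θ
  have hsqrt := Real.sqrt_pos.2 hD
  have hsq := Real.sq_sqrt hD.le
  refine (((Real.hasDerivAt_sin θ).mul (Real.hasDerivAt_cos θ)).div
    ((hasDerivAt_trigForm A B θ).sqrt hD.ne') hsqrt.ne').congr_deriv ?_
  rw [hsq, Pi.mul_apply]
  field_simp
  rw [hsq]
  unfold trigForm
  ring

-- Up to the factor `R - P`, the two integrands differ by the derivative of
-- `sin θ * cos θ / √(trigForm A B θ)`, which vanishes at both endpoints.
lemma integral_trigForm_div_sqrt (hA : 0 < A) (hB : 0 < B) (P R : ℝ) :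
    ∫ θ in 0..π / 2, trigForm P R θ / √(trigForm A B θ) =
      ∫ θ in 0..π / 2, trigForm (A * R) (B * P) θ / √(trigForm A B θ) ^ 3 := by
  have hint (n : ℕ) {g : ℝ → ℝ} (hg : Continuous g) :=
    (continuous_div_sqrt_trigForm_pow hA hB n hg).intervalIntegrable (μ := volume) 0 (π / 2)
  have hexact : ∫ θ in 0..π / 2,
      (B * Real.cos θ ^ 4 - A * Real.sin θ ^ 4) / √(trigForm A B θ) ^ 3 = 0 := by
    rw [intervalIntegral.integral_eq_sub_of_hasDerivAt
      (fun θ _ => hasDerivAt_sin_mul_cos_div_sqrt_trigForm hA hB θ) (hint 3 (by fun_prop))]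
    simp
  have hintegrand (θ : ℝ) : trigForm P R θ / √(trigForm A B θ) =
      trigForm (A * R) (B * P) θ / √(trigForm A B θ) ^ 3 +
        (R - P) * ((B * Real.cos θ ^ 4 - A * Real.sin θ ^ 4) / √(trigForm A B θ) ^ 3) := by
    have hD := trigForm_pos hA hB θ
    have := Real.sqrt_pos.2 hD
    field_simp
    rw [Real.sq_sqrt hD.le]
    unfold trigForm
    linear_combination
      (A * R * Real.sin θ ^ 2 + B * P * Real.cos θ ^ 2) * Real.sin_sq_add_cos_sq θ
  simp only [hintegrand]
  rw [intervalIntegral.integral_add (hint 3 (by fun_prop)) ((hint 3 (by fun_prop)).const_mul _),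
    intervalIntegral.integral_const_mul, hexact, mul_zero, add_zero]

lemma hasDerivAt_integral_one_div_sqrt_trigForm {a b : ℝ → ℝ} {x₀ : ℝ} (ha : ContDiff ℝ 1 a)
    (hb : ContDiff ℝ 1 b) (ha₀ : 0 < a x₀) (hb₀ : 0 < b x₀) :
    HasDerivAt (fun x => ∫ θ in 0..π / 2, 1 / √(trigForm (a x) (b x) θ))
      (-(1 / 2) * ∫ θ in 0..π / 2,
        trigForm (deriv a x₀) (deriv b x₀) θ / √(trigForm (a x₀) (b x₀) θ) ^ 3) x₀ := by
  have hac := ha.continuous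
  have hbc := hb.continuous
  have := ha.continuous_deriv_one
  have := hb.continuous_deriv_one
  rw [← intervalIntegral.integral_const_mul]
  refine hasDerivAt_intervalIntegral_of_continuousOn_deriv (s := {x | 0 < a x ∧ 0 < b x})
    (F' := fun x θ =>
      -(1 / 2) * (trigForm (deriv a x) (deriv b x) θ / √(trigForm (a x) (b x) θ) ^ 3))
    (((isOpen_lt continuous_const hac).inter (isOpen_lt continuous_const hbc)).mem_nhds
      ⟨ha₀, hb₀⟩)
    (fun x hx => ?_) ?_ fun x hx θ _ => ?_
  · simpa using (continuous_div_sqrt_trigForm_pow hx.1 hx.2 1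
      (g := fun _ => 1) continuous_const).continuousOn
  · refine ContinuousOn.const_mul (ContinuousOn.div (by fun_prop) (by fun_prop) ?_) _
    rintro ⟨x, θ⟩ ⟨hx, -⟩
    exact pow_ne_zero 3 (Real.sqrt_pos.2 (trigForm_pos hx.1 hx.2 θ)).ne'
  · have hD := trigForm_pos hx.1 hx.2 θ
    have hsqrt := Real.sqrt_pos.2 hD
    have hform :
        HasDerivAt (fun y => trigForm (a y) (b y) θ) (trigForm (deriv a x) (deriv b x) θ) x :=
      ((ha.differentiable_one x).hasDerivAt.mul_const _).add
        ((hb.differentiable_one x).hasDerivAt.mul_const _)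
    simp only [one_div]
    refine ((hform.sqrt hD.ne').inv hsqrt.ne').congr_deriv ?_
    field_simp

end TrigForm

section AbelianPeriod

variable {b1 b2 b3 : ℝ}

lemma integral_div_sqrt_cubic (g : ℝ → ℝ) (b3 : ℝ) (h : b2 < b1) :
    ∫ l in b2..b1, g l / √((b1 - l) * (l - b2) * (l - b3)) =
      2 * ∫ θ in 0..π / 2, g (trigForm b1 b2 θ) / √(trigForm (b1 - b3) (b2 - b3) θ) := by
  have hsubst := intervalIntegral.integral_deriv_smul_comp_of_deriv_nonneg (a := 0) (b := π / 2)
    (g := fun l => g l / √((b1 - l) * (l - b2) * (l - b3))) (f := trigForm b1 b2)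
    (f' := fun θ => 2 * (b1 - b2) * (Real.sin θ * Real.cos θ)) (by fun_prop)
    (fun θ _ => hasDerivAt_trigForm b1 b2 θ) fun θ hθ => by
      rw [min_eq_left (by positivity), max_eq_right (by positivity)] at hθ
      have := sin_mul_cos_pos_of_mem_Ioo hθ
      have := sub_pos.2 h
      positivity
  have hzero : trigForm b1 b2 0 = b2 := by simp [trigForm]
  have hend : trigForm b1 b2 (π / 2) = b1 := by simp [trigForm]
  rw [hzero, hend] at hsubst
  rw [← hsubst, ← intervalIntegral.integral_const_mul,
    intervalIntegral.integral_of_le (by positivity),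
    intervalIntegral.integral_of_le (by positivity), integral_Ioc_eq_integral_Ioo,
    integral_Ioc_eq_integral_Ioo]
  refine setIntegral_congr_fun measurableSet_Ioo fun θ hθ => ?_
  have hsc : 0 < (b1 - b2) * (Real.sin θ * Real.cos θ) :=
    mul_pos (sub_pos.2 h) (sin_mul_cos_pos_of_mem_Ioo hθ)
  have hcubic : (b1 - trigForm b1 b2 θ) * (trigForm b1 b2 θ - b2) * (trigForm b1 b2 θ - b3) =
      ((b1 - b2) * (Real.sin θ * Real.cos θ)) ^ 2 * trigForm (b1 - b3) (b2 - b3) θ := by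
    rw [← neg_sub, trigForm_sub_const, trigForm_sub_const, trigForm_sub_const]
    unfold trigForm
    ring
  simp only [smul_eq_mul, Function.comp_apply]
  rw [hcubic, Real.sqrt_mul (sq_nonneg _), Real.sqrt_sq hsc.le, mul_assoc 2, mul_assoc 2,
    mul_div_assoc', mul_div_mul_left _ _ hsc.ne']

/-- The period `𝒥ₖ = 2 ∫ lᵏ / √Q(l) dl` of the elliptic curve over the cut `[b₂, b₁]`. -/
noncomputable def abelianPeriod (k : ℕ) (b1 b2 b3 : ℝ) : ℝ :=
  2 * ∫ l in b2..b1, l ^ k / √((b1 - l) * (l - b2) * (l - b3))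

lemma abelianPeriod_eq_integral_trigForm (k : ℕ) (b3 : ℝ) (h21 : b2 < b1) :
    abelianPeriod k b1 b2 b3 =
      4 * ∫ θ in 0..π / 2, trigForm b1 b2 θ ^ k / √(trigForm (b1 - b3) (b2 - b3) θ) := by
  rw [abelianPeriod, integral_div_sqrt_cubic (· ^ k) b3 h21]
  ring

lemma abelianPeriod_one_sub_mul_abelianPeriod_zero (h32 : b3 < b2) (h21 : b2 < b1) (c : ℝ) :
    abelianPeriod 1 b1 b2 b3 - c * abelianPeriod 0 b1 b2 b3 =
      4 * ∫ θ in 0..π / 2, trigForm (b1 - c) (b2 - c) θ / √(trigForm (b1 - b3) (b2 - b3) θ) := by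
  have hint {g : ℝ → ℝ} (hg : Continuous g) : IntervalIntegrable
      (fun θ => g θ / √(trigForm (b1 - b3) (b2 - b3) θ)) volume 0 (π / 2) := by
    simpa using (continuous_div_sqrt_trigForm_pow (sub_pos.2 (h32.trans h21)) (sub_pos.2 h32) 1
      hg).intervalIntegrable 0 (π / 2)
  have hsplit (θ : ℝ) : trigForm (b1 - c) (b2 - c) θ / √(trigForm (b1 - b3) (b2 - b3) θ) =
      trigForm b1 b2 θ / √(trigForm (b1 - b3) (b2 - b3) θ) -
        c * (1 / √(trigForm (b1 - b3) (b2 - b3) θ)) := by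
    rw [← trigForm_sub_const, sub_div, mul_one_div]
  simp only [abelianPeriod_eq_integral_trigForm _ b3 h21, hsplit, pow_zero, pow_one]
  rw [intervalIntegral.integral_sub (hint (by fun_prop)) ((hint (by fun_prop)).const_mul c),
    intervalIntegral.integral_const_mul]
  ring

lemma mul_abelianPeriod_zero_lt_abelianPeriod_one (h32 : b3 < b2) (h21 : b2 < b1) :
    b2 * abelianPeriod 0 b1 b2 b3 < abelianPeriod 1 b1 b2 b3 := by
  have hpos := integral_trigForm_div_sqrt_pos (sub_pos.2 (h32.trans h21)) (sub_pos.2 h32)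
    (P := b1 - b2) (R := b2 - b2) (by linarith) (by linarith) (by linarith)
  linarith [abelianPeriod_one_sub_mul_abelianPeriod_zero h32 h21 b2]

lemma abelianPeriod_one_lt_mul_abelianPeriod_zero (h32 : b3 < b2) (h21 : b2 < b1) :
    abelianPeriod 1 b1 b2 b3 < b1 * abelianPeriod 0 b1 b2 b3 := by
  have hpos := integral_trigForm_div_sqrt_pos (sub_pos.2 (h32.trans h21)) (sub_pos.2 h32)
    (P := 0) (R := b1 - b2) le_rfl (by linarith) (by linarith)
  have hneg (θ : ℝ) : trigForm (b1 - b1) (b2 - b1) θ = -trigForm 0 (b1 - b2) θ := by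
    unfold trigForm
    ring
  have hdiff := abelianPeriod_one_sub_mul_abelianPeriod_zero h32 h21 b1
  simp only [hneg, neg_div, intervalIntegral.integral_neg] at hdiff
  linarith

lemma abelianPeriod_zero_pos (h32 : b3 < b2) (h21 : b2 < b1) : 0 < abelianPeriod 0 b1 b2 b3 := by
  have hlt := (mul_abelianPeriod_zero_lt_abelianPeriod_one h32 h21).trans
    (abelianPeriod_one_lt_mul_abelianPeriod_zero h32 h21)
  exact pos_of_mul_pos_right (by linarith : 0 < (b1 - b2) * _) (sub_pos.2 h21).le

lemma hasDerivAt_abelianPeriod_zero {β₁ β₂ β₃ : ℝ → ℝ} {x₀ : ℝ} (h₁ : ContDiff ℝ 1 β₁)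
    (h₂ : ContDiff ℝ 1 β₂) (h₃ : ContDiff ℝ 1 β₃) (h32 : β₃ x₀ < β₂ x₀) (h21 : β₂ x₀ < β₁ x₀) :
    HasDerivAt (fun x => abelianPeriod 0 (β₁ x) (β₂ x) (β₃ x))
      (-2 * ∫ θ in 0..π / 2, trigForm (deriv β₁ x₀ - deriv β₃ x₀) (deriv β₂ x₀ - deriv β₃ x₀) θ /
        √(trigForm (β₁ x₀ - β₃ x₀) (β₂ x₀ - β₃ x₀) θ) ^ 3) x₀ := by
  have hderiv := (hasDerivAt_integral_one_div_sqrt_trigForm (h₁.sub h₃) (h₂.sub h₃)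
    (sub_pos.2 (h32.trans h21)) (sub_pos.2 h32)).const_mul 4
  rw [deriv_fun_sub h₁.differentiable_one.differentiableAt h₃.differentiable_one.differentiableAt,
    deriv_fun_sub h₂.differentiable_one.differentiableAt h₃.differentiable_one.differentiableAt,
    ← mul_assoc] at hderiv
  refine (hderiv.congr_deriv (by norm_num)).congr_of_eventuallyEq ?_
  filter_upwards [h₂.continuous.continuousAt.eventually_lt h₁.continuous.continuousAt h21]
    with x hx
  simp only [abelianPeriod_eq_integral_trigForm 0 (β₃ x) hx, pow_zero]

-- The coordinate line of `bᵢ` satisfies `hA` and `hB` with `c = bᵢ` and `P = ∏_{j ≠ i} (bᵢ - bⱼ)`.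
lemma hasDerivAt_abelianPeriod_zero_of_velocity {β₁ β₂ β₃ : ℝ → ℝ} {x₀ c P : ℝ}
    (h₁ : ContDiff ℝ 1 β₁) (h₂ : ContDiff ℝ 1 β₂) (h₃ : ContDiff ℝ 1 β₃)
    (h32 : β₃ x₀ < β₂ x₀) (h21 : β₂ x₀ < β₁ x₀) (hP : P ≠ 0)
    (hA : P * (deriv β₁ x₀ - deriv β₃ x₀) = (β₁ x₀ - β₃ x₀) * (c - β₂ x₀))
    (hB : P * (deriv β₂ x₀ - deriv β₃ x₀) = (β₂ x₀ - β₃ x₀) * (c - β₁ x₀)) :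
    HasDerivAt (fun x => abelianPeriod 0 (β₁ x) (β₂ x) (β₃ x))
      ((abelianPeriod 1 (β₁ x₀) (β₂ x₀) (β₃ x₀) - c * abelianPeriod 0 (β₁ x₀) (β₂ x₀) (β₃ x₀)) /
        (2 * P)) x₀ := by
  refine (hasDerivAt_abelianPeriod_zero h₁ h₂ h₃ h32 h21).congr_deriv ?_
  have hform (θ : ℝ) : trigForm ((β₁ x₀ - β₃ x₀) * (β₂ x₀ - c)) ((β₂ x₀ - β₃ x₀) * (β₁ x₀ - c)) θ =
      -P * trigForm (deriv β₁ x₀ - deriv β₃ x₀) (deriv β₂ x₀ - deriv β₃ x₀) θ := by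
    unfold trigForm
    linear_combination Real.sin θ ^ 2 * hA + Real.cos θ ^ 2 * hB
  rw [abelianPeriod_one_sub_mul_abelianPeriod_zero h32 h21,
    integral_trigForm_div_sqrt (sub_pos.2 (h32.trans h21)) (sub_pos.2 h32)]
  simp only [hform, mul_div_assoc, intervalIntegral.integral_const_mul]
  field_simp
  ring

end AbelianPeriod

section CharacteristicSpeed

/-- `v` is the characteristic speed `(∂Ω/∂β)/(∂𝒦/∂β)` at `x` of the conservation law
`∂_τ 𝒦 + ∂_y Ω = 0` in the Riemann coordinate `β`, where `K` and `Om` are `𝒦` and `Ω` as functions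
of that coordinate alone. Differentiability and `∂𝒦/∂β ≠ 0` are part of the notion, so that the
quotient is never a junk value. -/
def HasCharacteristicSpeed (K Om : ℝ → ℝ) (v x : ℝ) : Prop :=
  ∃ dK dO : ℝ, HasDerivAt K dK x ∧ HasDerivAt Om dO x ∧ dK ≠ 0 ∧ dO / dK = v

lemma hasCharacteristicSpeed_mul {K C : ℝ → ℝ} {K' C' x : ℝ} (hK : HasDerivAt K K' x)
    (hK' : K' ≠ 0) (hC : HasDerivAt C C' x) :
    HasCharacteristicSpeed K (fun y => K y * C y) (C x + K x / K' * C') x :=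
  ⟨K', _, hK, hK.mul hC, hK', by field_simp⟩

lemma hasDerivAt_two_div_sqrt_of_mul_deriv_eq {m : ℝ → ℝ} {m' x : ℝ} (hm : HasDerivAt m m' x)
    (hpos : 0 < m x) (hEuler : x * m' = m x) :
    HasDerivAt (fun y => 2 / √(m y)) (-(2 / √(m x)) / (2 * x)) x := by
  have hx : x ≠ 0 := left_ne_zero_of_mul (hEuler ▸ hpos.ne')
  have hsqrt := Real.sqrt_pos.2 hpos
  refine ((hasDerivAt_const x 2).div (hm.sqrt hpos.ne') hsqrt.ne').congr_deriv ?_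
  rw [Real.sq_sqrt hpos.le, ← hEuler]
  have hm' : m' ≠ 0 := right_ne_zero_of_mul (hEuler ▸ hpos.ne')
  field_simp
  ring

lemma hasCharacteristicSpeed_two_pi_div_mul_two_div_sqrt {J m : ℝ → ℝ} {J₁ P m' x : ℝ}
    (hJ : HasDerivAt J ((J₁ - x * J x) / (2 * P)) x) (hJ₀ : J x ≠ 0) (hJ₁ : J₁ - x * J x ≠ 0)
    (hP : P ≠ 0) (hm : HasDerivAt m m' x) (hpos : 0 < m x) (hEuler : x * m' = m x) :
    HasCharacteristicSpeed (fun y => 2 * π / J y) (fun y => 2 * π / J y * (2 / √(m y)))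
      (2 / √(m x) * (1 - P / (x * (x + -J₁ / J x)))) x := by
  have hx : x ≠ 0 := left_ne_zero_of_mul (hEuler ▸ hpos.ne')
  have hK := (hasDerivAt_const x (2 * π)).fun_div hJ hJ₀
  have hK' : (0 * J x - 2 * π * ((J₁ - x * J x) / (2 * P))) / J x ^ 2 ≠ 0 := by
    simp [Real.pi_ne_zero, hJ₀, hJ₁, hP]
  convert hasCharacteristicSpeed_mul hK hK' (hasDerivAt_two_div_sqrt_of_mul_deriv_eq hm hpos hEuler)
    using 1
  have hα : x + -J₁ / J x = -(J₁ - x * J x) / J x := by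
    field_simp
    ring
  rw [hα]
  field_simp
  ring

variable {b1 b2 b3 : ℝ}

/-- The wave number `𝒦 = 2π / 𝒥₀` of the one-phase travelling waves. -/
noncomputable def waveNumber (b1 b2 b3 : ℝ) : ℝ := 2 * π / abelianPeriod 0 b1 b2 b3

/-- The phase velocity `C = 2 / √(b₁ b₂ b₃)` of the one-phase travelling waves. -/
noncomputable def phaseVelocity (b1 b2 b3 : ℝ) : ℝ := 2 / √(b1 * b2 * b3)

lemma hasCharacteristicSpeed_waveNumber_fst (hpos : 0 < b1 * b2 * b3) (h32 : b3 < b2)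
    (h21 : b2 < b1) :
    HasCharacteristicSpeed (waveNumber · b2 b3)
      (fun x => waveNumber x b2 b3 * phaseVelocity x b2 b3)
      (phaseVelocity b1 b2 b3 * (1 - (b1 - b2) * (b1 - b3) /
        (b1 * (b1 + -abelianPeriod 1 b1 b2 b3 / abelianPeriod 0 b1 b2 b3)))) b1 := by
  have hP : (b1 - b2) * (b1 - b3) ≠ 0 :=
    mul_ne_zero (sub_ne_zero.2 h21.ne') (sub_ne_zero.2 (h32.trans h21).ne')
  have hJ := hasDerivAt_abelianPeriod_zero_of_velocity (x₀ := b1) (c := b1) contDiff_id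
    (contDiff_const (c := b2)) (contDiff_const (c := b3)) h32 h21 hP
    (by simp; ring) (by simp)
  have hne := (sub_neg.2 (abelianPeriod_one_lt_mul_abelianPeriod_zero h32 h21)).ne
  have hm := ((hasDerivAt_id' b1).mul_const b2).mul_const b3
  exact hasCharacteristicSpeed_two_pi_div_mul_two_div_sqrt hJ (abelianPeriod_zero_pos h32 h21).ne'
    hne hP hm hpos (by ring)

lemma hasCharacteristicSpeed_waveNumber_snd (hpos : 0 < b1 * b2 * b3) (h32 : b3 < b2)
    (h21 : b2 < b1) :
    HasCharacteristicSpeed (waveNumber b1 · b3)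
      (fun x => waveNumber b1 x b3 * phaseVelocity b1 x b3)
      (phaseVelocity b1 b2 b3 * (1 - (b2 - b1) * (b2 - b3) /
        (b2 * (b2 + -abelianPeriod 1 b1 b2 b3 / abelianPeriod 0 b1 b2 b3)))) b2 := by
  have hP : (b2 - b1) * (b2 - b3) ≠ 0 :=
    mul_ne_zero (sub_ne_zero.2 h21.ne) (sub_ne_zero.2 h32.ne')
  have hJ := hasDerivAt_abelianPeriod_zero_of_velocity (x₀ := b2) (c := b2)
    (contDiff_const (c := b1)) contDiff_id (contDiff_const (c := b3)) h32 h21 hP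
    (by simp) (by simp; ring)
  have hne := (sub_pos.2 (mul_abelianPeriod_zero_lt_abelianPeriod_one h32 h21)).ne'
  have hm := ((hasDerivAt_id' b2).const_mul b1).mul_const b3
  exact hasCharacteristicSpeed_two_pi_div_mul_two_div_sqrt hJ (abelianPeriod_zero_pos h32 h21).ne'
    hne hP hm hpos (by ring)

lemma hasCharacteristicSpeed_waveNumber_thd (hpos : 0 < b1 * b2 * b3) (h32 : b3 < b2)
    (h21 : b2 < b1) :
    HasCharacteristicSpeed (waveNumber b1 b2 ·)
      (fun x => waveNumber b1 b2 x * phaseVelocity b1 b2 x)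
      (phaseVelocity b1 b2 b3 * (1 - (b3 - b1) * (b3 - b2) /
        (b3 * (b3 + -abelianPeriod 1 b1 b2 b3 / abelianPeriod 0 b1 b2 b3)))) b3 := by
  have hP : (b3 - b1) * (b3 - b2) ≠ 0 :=
    mul_ne_zero (sub_ne_zero.2 (h32.trans h21).ne) (sub_ne_zero.2 h32.ne)
  have hJ := hasDerivAt_abelianPeriod_zero_of_velocity (x₀ := b3) (c := b3)
    (contDiff_const (c := b1)) (contDiff_const (c := b2)) contDiff_id h32 h21 hP
    (by simp; ring) (by simp; ring)
  have hJ₀ := abelianPeriod_zero_pos h32 h21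
  have hne : abelianPeriod 1 b1 b2 b3 - b3 * abelianPeriod 0 b1 b2 b3 ≠ 0 :=
    (sub_pos.2 ((mul_lt_mul_of_pos_right h32 hJ₀).trans
      (mul_abelianPeriod_zero_lt_abelianPeriod_one h32 h21))).ne'
  have hm := (hasDerivAt_id' b3).const_mul (b1 * b2)
  exact hasCharacteristicSpeed_two_pi_div_mul_two_div_sqrt hJ hJ₀.ne' hne hP hm hpos (by ring)

end CharacteristicSpeed

theorem stmt_13_general
    (J0 J1 K Om : ℝ → ℝ → ℝ → ℝ)
    (hJ0 : ∀ b1 b2 b3, J0 b1 b2 b3 =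
      2 * ∫ l in b2..b1, 1 / Real.sqrt ((b1 - l) * (l - b2) * (l - b3)))
    (hJ1 : ∀ b1 b2 b3, J1 b1 b2 b3 =
      2 * ∫ l in b2..b1, l / Real.sqrt ((b1 - l) * (l - b2) * (l - b3)))
    (hK : ∀ b1 b2 b3, K b1 b2 b3 = 2 * Real.pi / J0 b1 b2 b3)
    (hOm : ∀ b1 b2 b3, Om b1 b2 b3 =
      (4 * Real.pi / J0 b1 b2 b3) * (1 / Real.sqrt (b1 * b2 * b3))) :
    ∀ b1 b2 b3 : ℝ, 0 < b1 * b2 * b3 → b3 < b2 → b2 < b1 →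
      ∃ dK1 dO1 dK2 dO2 dK3 dO3 : ℝ,
        HasDerivAt (fun x => K x b2 b3) dK1 b1 ∧ HasDerivAt (fun x => Om x b2 b3) dO1 b1 ∧
        HasDerivAt (fun x => K b1 x b3) dK2 b2 ∧ HasDerivAt (fun x => Om b1 x b3) dO2 b2 ∧
        HasDerivAt (fun x => K b1 b2 x) dK3 b3 ∧ HasDerivAt (fun x => Om b1 b2 x) dO3 b3 ∧
        dK1 ≠ 0 ∧ dK2 ≠ 0 ∧ dK3 ≠ 0 ∧
        dO1 / dK1 = (2 / Real.sqrt (b1 * b2 * b3))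
          * (1 - (b1 - b2) * (b1 - b3) / (b1 * (b1 + (-(J1 b1 b2 b3) / J0 b1 b2 b3)))) ∧
        dO2 / dK2 = (2 / Real.sqrt (b1 * b2 * b3))
          * (1 - (b2 - b1) * (b2 - b3) / (b2 * (b2 + (-(J1 b1 b2 b3) / J0 b1 b2 b3)))) ∧
        dO3 / dK3 = (2 / Real.sqrt (b1 * b2 * b3))
          * (1 - (b3 - b1) * (b3 - b2) / (b3 * (b3 + (-(J1 b1 b2 b3) / J0 b1 b2 b3)))) := by
  obtain rfl : J0 = abelianPeriod 0 := by
    funext b1 b2 b3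
    simp only [hJ0, abelianPeriod, pow_zero]
  obtain rfl : J1 = abelianPeriod 1 := by
    funext b1 b2 b3
    simp only [hJ1, abelianPeriod, pow_one]
  obtain rfl : K = waveNumber := by
    funext b1 b2 b3
    rw [hK, waveNumber]
  obtain rfl : Om = fun b1 b2 b3 => waveNumber b1 b2 b3 * phaseVelocity b1 b2 b3 := by
    funext b1 b2 b3
    rw [hOm, waveNumber, phaseVelocity]
    ring
  intro b1 b2 b3 hpos h32 h21
  obtain ⟨dK1, dO1, hK1, hO1, hne1, hv1⟩ := hasCharacteristicSpeed_waveNumber_fst hpos h32 h21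
  obtain ⟨dK2, dO2, hK2, hO2, hne2, hv2⟩ := hasCharacteristicSpeed_waveNumber_snd hpos h32 h21
  obtain ⟨dK3, dO3, hK3, hO3, hne3, hv3⟩ := hasCharacteristicSpeed_waveNumber_thd hpos h32 h21
  exact ⟨dK1, dO1, dK2, dO2, dK3, dO3, hK1, hO1, hK2, hO2, hK3, hO3, hne1, hne2, hne3,
    hv1, hv2, hv3⟩

/-- the characteristic speeds of the one-phase Whitham equations of the
first negative KdV flow: with `𝒦 = 2π/𝒥₀`, `Ω = (4π/𝒥₀)(β¹β²β³)^{−1/2}`, the partial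
derivatives exist, `∂𝒦/∂β^i ≠ 0`, and
`v^i = (∂Ω/∂β^i)/(∂𝒦/∂β^i) = (2/√(β¹β²β³))(1 − ∏_{j≠i}(β^i−β^j)/(β^i(β^i+α₁)))`. -/
theorem stmt_13
    (J0 J1 K Om : ℝ → ℝ → ℝ → ℝ)
    (hJ0 : ∀ b1 b2 b3, J0 b1 b2 b3 =
      2 * ∫ l in b2..b1, 1 / Real.sqrt ((b1 - l) * (l - b2) * (l - b3)))
    (hJ1 : ∀ b1 b2 b3, J1 b1 b2 b3 =
      2 * ∫ l in b2..b1, l / Real.sqrt ((b1 - l) * (l - b2) * (l - b3)))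
    (hK : ∀ b1 b2 b3, K b1 b2 b3 = 2 * Real.pi / J0 b1 b2 b3)
    (hOm : ∀ b1 b2 b3, Om b1 b2 b3 =
      (4 * Real.pi / J0 b1 b2 b3) * (1 / Real.sqrt (b1 * b2 * b3))) :
    ∀ b1 b2 b3 : ℝ, 0 < b3 → b3 < b2 → b2 < b1 →
      ∃ dK1 dO1 dK2 dO2 dK3 dO3 : ℝ,
        HasDerivAt (fun x => K x b2 b3) dK1 b1 ∧ HasDerivAt (fun x => Om x b2 b3) dO1 b1 ∧
        HasDerivAt (fun x => K b1 x b3) dK2 b2 ∧ HasDerivAt (fun x => Om b1 x b3) dO2 b2 ∧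
        HasDerivAt (fun x => K b1 b2 x) dK3 b3 ∧ HasDerivAt (fun x => Om b1 b2 x) dO3 b3 ∧
        dK1 ≠ 0 ∧ dK2 ≠ 0 ∧ dK3 ≠ 0 ∧
        dO1 / dK1 = (2 / Real.sqrt (b1 * b2 * b3))
          * (1 - (b1 - b2) * (b1 - b3) / (b1 * (b1 + (-(J1 b1 b2 b3) / J0 b1 b2 b3)))) ∧
        dO2 / dK2 = (2 / Real.sqrt (b1 * b2 * b3))
          * (1 - (b2 - b1) * (b2 - b3) / (b2 * (b2 + (-(J1 b1 b2 b3) / J0 b1 b2 b3)))) ∧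
        dO3 / dK3 = (2 / Real.sqrt (b1 * b2 * b3))
          * (1 - (b3 - b1) * (b3 - b2) / (b3 * (b3 + (-(J1 b1 b2 b3) / J0 b1 b2 b3)))) := by
  exact fun b1 b2 b3 h3 h32 h21 => stmt_13_general J0 J1 K Om hJ0 hJ1 hK hOm b1 b2 b3
    (mul_pos (mul_pos (h3.trans (h32.trans h21)) (h3.trans h32)) h3) h32 h21
end
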